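/- arXiv:2511.03557 — 2 statements merged into one kernel-verified Lean document; each statement's English description precedes it below -/
import Mathlib

section
/- For polytopes P and Q both containing the origin as a vertex, the simplex-counting polynomial of the subdirect sum satisfies S_{P∨Q}(x) = (1/x)·S⁰_P(x)·S⁰_Q(x) + S¹_P(x)·S¹_Q(x). -/
open Set

variable {E : Type*} [AddCommGroup E] [Module ℝ E]

/-- A polytope: the convex hull of a finite set of points. -/
def IsPolytope (P : Set E) : Prop := ∃ S : Finset E, P = convexHull ℝ (S : Set E)

open Classical in
/-- Dimension of a polytope: `-1` for the empty set, else the dimension of its affine span. -/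
noncomputable def polyDim (P : Set E) : ℤ :=
  if P = ∅ then -1 else (Module.finrank ℝ (vectorSpan ℝ P) : ℤ)

/-- Number of vertices (extreme points). -/
noncomputable def vertexCount (P : Set E) : ℕ := (P.extremePoints ℝ).ncard

/-- A simplex: a polytope with `dim + 1` vertices (the empty set counts as a simplex). -/
def IsSimplex (P : Set E) : Prop :=
  IsPolytope P ∧ (vertexCount P : ℤ) = polyDim P + 1

/-- Faces of a polytope are its extreme subsets. -/
def IsFaceOf (F P : Set E) : Prop := IsExtreme ℝ P F

/-- Number of `k`-dimensional simplex faces of `P`. -/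
noncomputable def simpCount (P : Set E) (k : ℤ) : ℕ :=
  {F : Set E | IsFaceOf F P ∧ IsSimplex F ∧ polyDim F = k}.ncard

/-- Number of `k`-dimensional simplex faces of `P` containing the origin. -/
noncomputable def simpCount0 (P : Set E) (k : ℤ) : ℕ :=
  {F : Set E | IsFaceOf F P ∧ IsSimplex F ∧ polyDim F = k ∧ (0 : E) ∈ F}.ncard

/-- Number of `k`-dimensional simplex faces of `P` not containing the origin. -/
noncomputable def simpCount1 (P : Set E) (k : ℤ) : ℕ :=
  {F : Set E | IsFaceOf F P ∧ IsSimplex F ∧ polyDim F = k ∧ (0 : E) ∉ F}.ncard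

/-- Subdirect sum of two polytopes (each containing the origin as a vertex). -/
def subdirectSum {E F : Type*} [AddCommGroup E] [Module ℝ E] [AddCommGroup F] [Module ℝ F]
    (P : Set E) (Q : Set F) : Set (E × F) :=
  convexHull ℝ ((fun p => (p, (0 : F))) '' P ∪ (fun q => ((0 : E), q)) '' Q)

/-!
Replace a convex set `s` by the cone `homogenization ℝ s` over `{1} × s`; the extreme convex subsets
of `s` correspond to faces of the cone. The point `(c, (x, y))` lies in the cone over `P ∨ Q` iff
the height splits as `c = a + b` with `(a, x)` in the cone over `P` and `(b, y)` in the cone over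
`Q`. Adding multiples of `(1, 0)` raises heights inside the cones over `P` and `Q`. So the points
of the cone over a face `A` of `P` may be shifted in height freely if `0 ∈ A`, and are the lowest
ones if `0 ∉ A`. If `A` and `B` agree on containing `0`, a splitting of a point of the cone over
`A ∨ B` is therefore a splitting into points of the cones over `A` and `B`: this makes `A ∨ B` a
face of `P ∨ Q`, and every face `G` of `P ∨ Q` is of this form, with `A` and `B` its intersections
with the two factors.

A face is a simplex iff its number of nonzero vertices equals the rank of its linear span. Both
quantities are additive under `∨` and the rank is at most the number of nonzero vertices, so
`A ∨ B` is a simplex iff `A` and `B` are. Finally `A ∨ B` has as many vertices as `A` and `B`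
together, except that the vertex `0` is shared when it belongs to both; this is the factor `1 / x`.
-/

section Homogenization

variable {𝕜 V V' : Type*} [Field 𝕜] [LinearOrder 𝕜] [IsStrictOrderedRing 𝕜]
  [AddCommGroup V] [Module 𝕜 V] [AddCommGroup V'] [Module 𝕜 V']

variable (𝕜) in
/-- The homogenization of a set `s`: the pointed cone spanned by `{1} × s`. The first coordinate of
a point of the cone is called its height, so that `s` is the slice at height `1` when it is
convex. -/
def homogenization (s : Set V) : PointedCone 𝕜 (𝕜 × V) :=
  PointedCone.hull 𝕜 ((fun x => ((1 : 𝕜), x)) '' s)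

theorem one_mk_mem_homogenization {s : Set V} {x : V} (hx : x ∈ s) :
    ((1 : 𝕜), x) ∈ homogenization 𝕜 s :=
  PointedCone.subset_hull (mem_image_of_mem _ hx)

theorem homogenization_mono {s t : Set V} (h : s ⊆ t) :
    homogenization 𝕜 s ≤ homogenization 𝕜 t :=
  Submodule.span_mono (image_mono h)

theorem homogenization_union (s t : Set V) :
    homogenization 𝕜 (s ∪ t) = homogenization 𝕜 s ⊔ homogenization 𝕜 t := by
  rw [homogenization, image_union, PointedCone.hull, Submodule.span_union]
  rfl

theorem homogenization_image (f : V →ₗ[𝕜] V') (s : Set V) :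
    homogenization 𝕜 (f '' s) = (homogenization 𝕜 s).map (LinearMap.id.prodMap f) := by
  rw [homogenization, homogenization, PointedCone.map, PointedCone.hull, PointedCone.hull,
    Submodule.map_span, image_image, image_image]
  rfl

theorem convex_setOf_one_mk_mem (C : PointedCone 𝕜 (𝕜 × V)) :
    Convex 𝕜 {x | ((1 : 𝕜), x) ∈ C} := by
  intro x hx y hy a b ha hb hab
  simpa [hab] using C.convex hx hy ha hb hab

theorem homogenization_convexHull (s : Set V) :
    homogenization 𝕜 (convexHull 𝕜 s) = homogenization 𝕜 s := by
  refine le_antisymm (Submodule.span_le.2 (image_subset_iff.2 ?_))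
    (homogenization_mono (subset_convexHull 𝕜 s))
  exact convexHull_min (fun x hx => one_mk_mem_homogenization hx) (convex_setOf_one_mk_mem _)

theorem mk_mem_homogenization {s : Set V} (hs : Convex 𝕜 s) {a : 𝕜} {x : V} :
    (a, x) ∈ homogenization 𝕜 s ↔ a = 0 ∧ x = 0 ∨ 0 < a ∧ a⁻¹ • x ∈ s := by
  constructor
  · suffices h : ∀ z ∈ homogenization 𝕜 s, z.1 = 0 ∧ z.2 = 0 ∨ 0 < z.1 ∧ z.1⁻¹ • z.2 ∈ s from
      h (a, x)
    intro z hz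
    induction hz using Submodule.span_induction with
    | mem z hz =>
      obtain ⟨y, hy, rfl⟩ := hz
      exact Or.inr ⟨one_pos, by simpa using hy⟩
    | zero => exact Or.inl ⟨rfl, rfl⟩
    | add z w _ _ hz hw =>
      rcases hz with ⟨hz₁, hz₂⟩ | ⟨hz₁, hz₂⟩
      · simpa [hz₁, hz₂] using hw
      rcases hw with ⟨hw₁, hw₂⟩ | ⟨hw₁, hw₂⟩
      · exact Or.inr (by simpa [hw₁, hw₂] using ⟨hz₁, hz₂⟩)
      have hzw : 0 < z.1 + w.1 := add_pos hz₁ hw₁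
      have hcomb := hs hz₂ hw₂ (div_nonneg hz₁.le hzw.le) (div_nonneg hw₁.le hzw.le)
        (by rw [← add_div, div_self hzw.ne'])
      refine Or.inr ⟨hzw, ?_⟩
      convert hcomb using 1
      simp only [Prod.fst_add, Prod.snd_add, smul_add, smul_smul]
      congr 2 <;> field_simp
    | smul c z _ hz =>
      obtain ⟨c, hc⟩ := c
      rcases hz with ⟨hz₁, hz₂⟩ | ⟨hz₁, hz₂⟩
      · exact Or.inl ⟨by simp [hz₁], by simp [hz₂]⟩
      rcases hc.eq_or_lt with rfl | hc
      · exact Or.inl ⟨by simp, by simp⟩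
      refine Or.inr ⟨by simpa using mul_pos hc hz₁, ?_⟩
      convert hz₂ using 1
      simp [Nonneg.mk_smul, smul_smul, hc.ne']
  · rintro (⟨rfl, rfl⟩ | ⟨ha, hx⟩)
    · exact zero_mem _
    · simpa [ha.ne'] using
        PointedCone.smul_mem _ ha.le (one_mk_mem_homogenization (𝕜 := 𝕜) hx)

theorem one_mk_mem_homogenization_iff {s : Set V} (hs : Convex 𝕜 s) {x : V} :
    ((1 : 𝕜), x) ∈ homogenization 𝕜 s ↔ x ∈ s := by
  simp [mk_mem_homogenization hs]

theorem fst_nonneg_of_mem_homogenization {s : Set V} {z : 𝕜 × V}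
    (hz : z ∈ homogenization 𝕜 s) : 0 ≤ z.1 := by
  rw [← homogenization_convexHull] at hz
  rcases (mk_mem_homogenization (convex_convexHull 𝕜 s)).1 hz with ⟨h, -⟩ | ⟨h, -⟩
  exacts [h.ge, h.le]

theorem eq_zero_of_mem_homogenization {s : Set V} {z : 𝕜 × V}
    (hz : z ∈ homogenization 𝕜 s) (hz₀ : z.1 = 0) : z = 0 := by
  rw [← homogenization_convexHull] at hz
  rcases (mk_mem_homogenization (convex_convexHull 𝕜 s)).1 hz with ⟨-, h⟩ | ⟨h, -⟩
  exacts [Prod.ext hz₀ h, absurd hz₀ h.ne']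

theorem mk_mem_homogenization_preimage {f : V →ₗ[𝕜] V'} (hf : Function.Injective f) {s : Set V'}
    (hs : Convex 𝕜 s) {a : 𝕜} {x : V} :
    (a, x) ∈ homogenization 𝕜 (f ⁻¹' s) ↔ (a, f x) ∈ homogenization 𝕜 s := by
  simp [mk_mem_homogenization hs, mk_mem_homogenization (hs.linear_preimage f),
    map_eq_zero_iff f hf]

theorem isFaceOf_homogenization_iff {s t : Set V} (hs : Convex 𝕜 s) (ht : Convex 𝕜 t) :
    (homogenization 𝕜 t).IsFaceOf (homogenization 𝕜 s) ↔ IsExtreme 𝕜 s t := by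
  constructor
  · intro h
    refine ⟨fun x hx => (one_mk_mem_homogenization_iff hs).1
      (h.le (one_mk_mem_homogenization hx)), ?_⟩
    rintro x hx y hy _ hz ⟨a, b, ha, hb, hab, rfl⟩
    refine (one_mk_mem_homogenization_iff ht).1 (h.mem_of_smul_add_smul_mem_left
      (one_mk_mem_homogenization hx) (one_mk_mem_homogenization hy) ha hb ?_)
    simpa [hab] using one_mk_mem_homogenization (𝕜 := 𝕜) hz
  · intro h
    refine .of_mem_of_add_mem_left (homogenization_mono h.subset) ?_
    rintro ⟨a, x⟩ ⟨b, y⟩ hx hy hxy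
    simp only [Prod.mk_add_mk, mk_mem_homogenization hs, mk_mem_homogenization ht] at hx hy hxy ⊢
    rcases hx with hx | ⟨ha, hx⟩
    · exact Or.inl hx
    rcases hy with ⟨rfl, rfl⟩ | ⟨hb, hy⟩
    · simpa using hxy
    have hab : 0 < a + b := add_pos ha hb
    refine Or.inr ⟨ha, h.left_mem_of_mem_openSegment hx hy
      (hxy.resolve_left fun h => hab.ne' h.1).2
      ⟨a / (a + b), b / (a + b), by positivity, by positivity, by field_simp, ?_⟩⟩
    simp only [smul_add, smul_smul]
    congr 2 <;> field_simp

section HeightShift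

variable {C F : PointedCone 𝕜 (𝕜 × V)} {a b : 𝕜} {x : V}

theorem mk_mem_of_mk_mem_of_le (h₀ : ((1 : 𝕜), (0 : V)) ∈ C) (hab : a ≤ b)
    (h : (a, x) ∈ C) : (b, x) ∈ C := by
  simpa using add_mem h (C.smul_mem (sub_nonneg.2 hab) h₀)

theorem mk_mem_of_isFaceOf_of_one_zero_mem (hF : F.IsFaceOf C) (h₀ : ((1 : 𝕜), (0 : V)) ∈ F)
    (ha : (a, x) ∈ F) (hb : (b, x) ∈ C) : (b, x) ∈ F := by
  rcases le_total a b with hab | hba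
  · exact mk_mem_of_mk_mem_of_le h₀ hab ha
  · refine hF.mem_of_add_mem_left hb (C.smul_mem (sub_nonneg.2 hba) (hF.le h₀)) ?_
    simpa using ha

theorem le_of_isFaceOf_of_one_zero_notMem (hF : F.IsFaceOf C) (h₀ : ((1 : 𝕜), (0 : V)) ∈ C)
    (h₀' : ((1 : 𝕜), (0 : V)) ∉ F) (ha : (a, x) ∈ F) (hb : (b, x) ∈ C) : a ≤ b := by
  by_contra! hba
  refine h₀' (hF.mem_of_smul_add_mem h₀ hb (sub_pos.2 hba) ?_)
  simpa using ha

end HeightShift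

end Homogenization

theorem one_mk_mem_span_of_mem_affineSpan {𝕜 V : Type*} [Ring 𝕜] [AddCommGroup V] [Module 𝕜 V]
    {s : Set V} {x : V} (hx : x ∈ affineSpan 𝕜 s) :
    ((1 : 𝕜), x) ∈ Submodule.span 𝕜 ((fun x => ((1 : 𝕜), x)) '' s) := by
  refine affineSpan_induction (p := fun y => ((1 : 𝕜), y) ∈ _) hx
    (fun y hy => Submodule.subset_span (mem_image_of_mem _ hy)) fun c u v w hu hv hw => ?_
  simpa using add_mem (Submodule.smul_mem _ c (sub_mem hu hv)) hw

section ExtremeSets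

variable {𝕜 V : Type*} [Field 𝕜] [LinearOrder 𝕜] [IsStrictOrderedRing 𝕜]
  [AddCommGroup V] [Module 𝕜 V]

theorem convexHull_inter_of_isExtreme {s t : Set V} (h : IsExtreme 𝕜 (convexHull 𝕜 s) t)
    (ht : Convex 𝕜 t) : convexHull 𝕜 (s ∩ t) = t := by
  refine (convexHull_min inter_subset_right ht).antisymm fun x hx => ?_
  suffices hs : convexHull 𝕜 s ⊆
      {y | y ∈ convexHull 𝕜 s ∧ (y ∈ t → y ∈ convexHull 𝕜 (s ∩ t))} from (hs (h.subset hx)).2 hx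
  refine convexHull_min (fun y hy => ⟨subset_convexHull 𝕜 s hy,
    fun hyt => subset_convexHull 𝕜 _ ⟨hy, hyt⟩⟩) (convex_iff_openSegment_subset.2 ?_)
  rintro y ⟨hy, hy'⟩ z ⟨hz, hz'⟩ w hw
  refine ⟨(convex_convexHull 𝕜 s).openSegment_subset hy hz hw, fun hwt => ?_⟩
  exact (convex_convexHull 𝕜 _).openSegment_subset
    (hy' (h.left_mem_of_mem_openSegment hy hz hwt hw))
    (hz' (h.right_mem_of_mem_openSegment hy hz hwt hw)) hw

theorem exists_sub_of_mem_span {s : Set V} {x : V} (hx : x ∈ Submodule.span 𝕜 s) :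
    ∃ y ∈ PointedCone.hull 𝕜 s, ∃ z ∈ PointedCone.hull 𝕜 s, x = y - z := by
  induction hx using Submodule.span_induction with
  | mem x hx => exact ⟨x, PointedCone.subset_hull hx, 0, zero_mem _, (sub_zero x).symm⟩
  | zero => exact ⟨0, zero_mem _, 0, zero_mem _, (sub_zero 0).symm⟩
  | add x x' _ _ hx hx' =>
    obtain ⟨y, hy, z, hz, rfl⟩ := hx
    obtain ⟨y', hy', z', hz', rfl⟩ := hx'
    exact ⟨y + y', add_mem hy hy', z + z', add_mem hz hz', by abel⟩
  | smul c x _ hx =>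
    obtain ⟨y, hy, z, hz, rfl⟩ := hx
    rcases le_total 0 c with hc | hc
    · exact ⟨c • y, PointedCone.smul_mem _ hc hy, c • z, PointedCone.smul_mem _ hc hz,
        smul_sub c y z⟩
    · exact ⟨-c • z, PointedCone.smul_mem _ (neg_nonneg.2 hc) hz,
        -c • y, PointedCone.smul_mem _ (neg_nonneg.2 hc) hy, by module⟩

theorem inter_affineSpan_of_isExtreme {s t : Set V} (hs : Convex 𝕜 s) (ht : Convex 𝕜 t)
    (h : IsExtreme 𝕜 s t) : s ∩ affineSpan 𝕜 t = t := by
  refine Subset.antisymm ?_ (subset_inter h.subset (subset_affineSpan 𝕜 t))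
  rintro x ⟨hxs, hxt⟩
  -- `(1, x) + z = y` with `y`, `z` in the cone over `t`, a face of the cone over `s`.
  obtain ⟨y, hy, z, hz, hyz⟩ := exists_sub_of_mem_span (one_mk_mem_span_of_mem_affineSpan hxt)
  refine (one_mk_mem_homogenization_iff ht).1 (((isFaceOf_homogenization_iff hs ht).2 h
    ).mem_of_add_mem_left (one_mk_mem_homogenization hxs) (homogenization_mono h.subset hz) ?_)
  rw [hyz, sub_add_cancel]
  exact hy

theorem mem_homogenization_insert {s : Set V} {p : V} {z : 𝕜 × V} :
    z ∈ homogenization 𝕜 (insert p s) ↔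
      ∃ a : 𝕜, 0 ≤ a ∧ ∃ u ∈ homogenization 𝕜 s, z = a • ((1 : 𝕜), p) + u := by
  rw [homogenization, image_insert_eq, PointedCone.hull, Submodule.mem_span_insert]
  exact ⟨fun ⟨a, u, hu, hz⟩ => ⟨a, a.2, u, hu, hz⟩, fun ⟨a, ha, u, hu, hz⟩ => ⟨⟨a, ha⟩, u, hu, hz⟩⟩

theorem eq_zero_of_smul_mem_homogenization {s : Set V} {p : V} (hp : p ∉ convexHull 𝕜 s) {c : 𝕜}
    (h : c • ((1 : 𝕜), p) ∈ homogenization 𝕜 s) : c = 0 := by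
  have hc : 0 ≤ c := by simpa using fst_nonneg_of_mem_homogenization h
  by_contra hc₀
  have h₁ := (PointedCone.smul_mem_iff _ (lt_of_le_of_ne hc (Ne.symm hc₀))).1 h
  rw [← homogenization_convexHull,
    one_mk_mem_homogenization_iff (convex_convexHull 𝕜 s)] at h₁
  exact hp h₁

theorem mem_extremePoints_convexHull_insert {s : Set V} {p : V} (hp : p ∉ convexHull 𝕜 s) :
    p ∈ (convexHull 𝕜 (insert p s)).extremePoints 𝕜 := by
  have decompose {x : V} (hx : x ∈ convexHull 𝕜 (insert p s)) :
      ∃ α : 𝕜, 0 ≤ α ∧ ∃ u ∈ homogenization 𝕜 s, ((1 : 𝕜), x) = α • ((1 : 𝕜), p) + u := by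
    rw [← mem_homogenization_insert, ← homogenization_convexHull]
    exact one_mk_mem_homogenization hx
  refine mem_extremePoints_iff_left.2 ⟨subset_convexHull 𝕜 _ (mem_insert p s), ?_⟩
  rintro x hx y hy ⟨a, b, ha, hb, hab, hxy⟩
  obtain ⟨α, -, u, hu, hxu⟩ := decompose hx
  obtain ⟨β, -, v, hv, hyv⟩ := decompose hy
  -- The parts over `s` sum to a multiple of `(1, p)`, but `p` is not in `convexHull 𝕜 s`.
  have huv : a • u + b • v = (1 - (a * α + b * β)) • ((1 : 𝕜), p) := by
    have hp' : ((1 : 𝕜), p) = a • ((1 : 𝕜), x) + b • ((1 : 𝕜), y) := by simp [hab, hxy]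
    rw [sub_smul, one_smul, eq_sub_iff_add_eq]
    conv_rhs => rw [hp', hxu, hyv]
    module
  have huv₀ : a • u + b • v = 0 := by
    have huv_mem : a • u + b • v ∈ homogenization 𝕜 s :=
      add_mem (PointedCone.smul_mem _ ha.le hu) (PointedCone.smul_mem _ hb.le hv)
    rw [huv] at huv_mem
    rw [huv, eq_zero_of_smul_mem_homogenization hp huv_mem, zero_smul]
  have hu₀ : u = 0 := by
    have hu₁ := fst_nonneg_of_mem_homogenization hu
    have hv₁ := fst_nonneg_of_mem_homogenization hv
    have h₁ : a * u.1 + b * v.1 = 0 := congrArg Prod.fst huv₀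
    exact eq_zero_of_mem_homogenization hu (by nlinarith)
  obtain ⟨hα, hx'⟩ : 1 = α ∧ x = α • p := by simpa [hu₀] using hxu
  rw [hx', ← hα, one_smul]

theorem convexHull_extremePoints_convexHull (s : Finset V) :
    convexHull 𝕜 ((convexHull 𝕜 (s : Set V)).extremePoints 𝕜) = convexHull 𝕜 (s : Set V) := by
  classical
  induction s using Finset.strongInduction with
  | H s ih =>
    by_cases! h : ∃ p ∈ s, p ∈ convexHull 𝕜 ((s.erase p : Finset V) : Set V)
    · obtain ⟨p, hps, hp⟩ := h
      have hs : convexHull 𝕜 (s : Set V) = convexHull 𝕜 ((s.erase p : Finset V) : Set V) := by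
        refine (convexHull_min ?_ (convex_convexHull 𝕜 _)).antisymm
          (convexHull_mono (Finset.coe_subset.2 (s.erase_subset p)))
        rw [← Finset.insert_erase hps, Finset.coe_insert, Finset.insert_erase hps]
        exact insert_subset hp (subset_convexHull 𝕜 _)
      rw [hs]
      exact ih _ (Finset.erase_ssubset hps)
    · refine (convexHull_min extremePoints_subset (convex_convexHull 𝕜 _)).antisymm
        (convexHull_mono fun p hp => ?_)
      have := mem_extremePoints_convexHull_insert (h p hp)
      rwa [← Finset.coe_insert, Finset.insert_erase hp] at this

end ExtremeSets

section Dimension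

variable {𝕜 V : Type*} [DivisionRing 𝕜] [AddCommGroup V] [Module 𝕜 V]

theorem vectorSpan_eq_span_of_zero_mem {s : Set V} (h₀ : (0 : V) ∈ s) :
    vectorSpan 𝕜 s = Submodule.span 𝕜 s := by
  rw [vectorSpan_eq_span_vsub_set_right 𝕜 h₀]
  simp

theorem span_eq_vectorSpan_sup_span_singleton {s : Set V} {x : V} (hx : x ∈ s) :
    Submodule.span 𝕜 s = vectorSpan 𝕜 s ⊔ Submodule.span 𝕜 {x} := by
  apply le_antisymm
  · refine Submodule.span_le.2 fun y hy => ?_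
    rw [← sub_add_cancel y x]
    exact Submodule.add_mem_sup (vsub_mem_vectorSpan 𝕜 hy hx) (Submodule.mem_span_singleton_self x)
  · refine sup_le (Submodule.span_le.2 ?_) (Submodule.span_mono (singleton_subset_iff.2 hx))
    rintro _ ⟨y, hy, z, hz, rfl⟩
    exact sub_mem (Submodule.subset_span hy) (Submodule.subset_span hz)

theorem finrank_sup_span_singleton_of_notMem {p : Submodule 𝕜 V} [FiniteDimensional 𝕜 p] {v : V}
    (hv : v ∉ p) :
    Module.finrank 𝕜 (p ⊔ Submodule.span 𝕜 {v} : Submodule 𝕜 V) = Module.finrank 𝕜 p + 1 := by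
  have hv₀ : v ≠ 0 := fun h => hv (h ▸ p.zero_mem)
  have h := Submodule.finrank_sup_add_finrank_inf_eq p (Submodule.span 𝕜 {v})
  rwa [(Submodule.disjoint_span_singleton_of_notMem hv).eq_bot, finrank_bot, add_zero,
    finrank_span_singleton hv₀] at h

theorem finrank_span_eq_finrank_vectorSpan_add_one {s : Set V}
    [FiniteDimensional 𝕜 (Submodule.span 𝕜 s)] (hs : s.Nonempty)
    (h₀ : (0 : V) ∉ affineSpan 𝕜 s) :
    Module.finrank 𝕜 (Submodule.span 𝕜 s) = Module.finrank 𝕜 (vectorSpan 𝕜 s) + 1 := by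
  obtain ⟨x, hx⟩ := hs
  have hspan := span_eq_vectorSpan_sup_span_singleton (𝕜 := 𝕜) hx
  have : FiniteDimensional 𝕜 (vectorSpan 𝕜 s) :=
    Submodule.finiteDimensional_of_le (hspan ▸ le_sup_left)
  rw [hspan, finrank_sup_span_singleton_of_notMem]
  intro hxv
  rw [← direction_affineSpan] at hxv
  apply h₀
  simpa using AffineSubspace.vadd_mem_of_mem_direction (neg_mem hxv) (mem_affineSpan 𝕜 hx)

theorem finrank_submodule_prod {V' : Type*} [AddCommGroup V'] [Module 𝕜 V']
    (p : Submodule 𝕜 V) (q : Submodule 𝕜 V') [FiniteDimensional 𝕜 p] [FiniteDimensional 𝕜 q] :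
    Module.finrank 𝕜 (p.prod q) = Module.finrank 𝕜 p + Module.finrank 𝕜 q := by
  have hrange : LinearMap.range (p.subtype.prodMap q.subtype) = p.prod q := by
    rw [LinearMap.range_prodMap, Submodule.range_subtype, Submodule.range_subtype]
  rw [← hrange, LinearMap.finrank_range_of_inj
    (p.injective_subtype.prodMap q.injective_subtype), Module.finrank_prod]

theorem span_convexHull {𝕜 V : Type*} [Field 𝕜] [LinearOrder 𝕜] [IsStrictOrderedRing 𝕜]
    [AddCommGroup V] [Module 𝕜 V] (s : Set V) :
    Submodule.span 𝕜 (convexHull 𝕜 s) = Submodule.span 𝕜 s :=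
  le_antisymm
    (Submodule.span_le.2 (convexHull_min Submodule.subset_span (Submodule.convex _)))
    (Submodule.span_mono (subset_convexHull 𝕜 s))

end Dimension

section Polytope

variable {P A : Set E}

theorem IsPolytope.convex (hP : IsPolytope P) : Convex ℝ P := by
  obtain ⟨S, rfl⟩ := hP
  exact convex_convexHull ℝ _

/-- The faces of `P` in the usual sense; extreme subsets need not be convex. As for `IsFaceOf`, the
empty set is a face. -/
def convexFaces (P : Set E) : Set (Set E) := {A | IsExtreme ℝ P A ∧ Convex ℝ A}

theorem IsPolytope.of_mem_convexFaces (hP : IsPolytope P) (hA : A ∈ convexFaces P) :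
    IsPolytope A := by
  classical
  obtain ⟨S, rfl⟩ := hP
  refine ⟨S.filter (· ∈ A), ?_⟩
  rw [Finset.coe_filter]
  exact (convexHull_inter_of_isExtreme hA.1 hA.2).symm

theorem IsPolytope.finite_convexFaces (hP : IsPolytope P) : (convexFaces P).Finite := by
  obtain ⟨S, rfl⟩ := hP
  refine (S.finite_toSet.finite_subsets.image (convexHull ℝ)).subset ?_
  intro A hA
  exact ⟨S ∩ A, inter_subset_left, convexHull_inter_of_isExtreme hA.1 hA.2⟩

theorem IsPolytope.convexHull_extremePoints (hP : IsPolytope P) :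
    convexHull ℝ (P.extremePoints ℝ) = P := by
  obtain ⟨S, rfl⟩ := hP
  exact convexHull_extremePoints_convexHull S

theorem IsPolytope.finite_extremePoints (hP : IsPolytope P) : (P.extremePoints ℝ).Finite := by
  obtain ⟨S, rfl⟩ := hP
  exact S.finite_toSet.subset extremePoints_convexHull_subset

theorem IsPolytope.finiteDimensional_span (hP : IsPolytope P) :
    FiniteDimensional ℝ (Submodule.span ℝ P) := by
  obtain ⟨S, rfl⟩ := hP
  rw [span_convexHull]
  infer_instance

/-- The number of vertices other than the origin. Like the rank of the linear span, and unlike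
`vertexCount`, it is additive under subdirect sums. -/
noncomputable def nonzeroVertexCount (P : Set E) : ℕ := (P.extremePoints ℝ \ {0}).ncard

theorem IsPolytope.finrank_span_le_nonzeroVertexCount (hP : IsPolytope P) :
    Module.finrank ℝ (Submodule.span ℝ P) ≤ nonzeroVertexCount P := by
  have hfin : (P.extremePoints ℝ \ {0}).Finite := hP.finite_extremePoints.sdiff
  have := hfin.fintype
  rw [← hP.convexHull_extremePoints, span_convexHull, ← Submodule.span_sdiff_singleton_zero,
    hP.convexHull_extremePoints, nonzeroVertexCount, ncard_eq_toFinset_card']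
  exact finrank_span_le_card _

open Classical in
theorem vertexCount_of_mem_convexFaces (hP : IsPolytope P) (h₀ : (0 : E) ∈ P.extremePoints ℝ)
    (hA : A ∈ convexFaces P) :
    vertexCount A = nonzeroVertexCount A + if (0 : E) ∈ A then 1 else 0 := by
  have hfin := (hP.of_mem_convexFaces hA).finite_extremePoints
  have hA₀ : (0 : E) ∈ A.extremePoints ℝ ↔ (0 : E) ∈ A := by simp [hA.1.extremePoints_eq, h₀]
  rw [vertexCount, nonzeroVertexCount]
  split_ifs with h
  · exact (ncard_sdiff_singleton_add_one (hA₀.2 h) hfin).symm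
  · rw [sdiff_singleton_eq_self (mt hA₀.1 h), add_zero]

open Classical in
theorem polyDim_add_one_of_mem_convexFaces (hP : IsPolytope P) (h₀ : (0 : E) ∈ P)
    (hA : A ∈ convexFaces P) :
    polyDim A + 1 = Module.finrank ℝ (Submodule.span ℝ A) + if (0 : E) ∈ A then 1 else 0 := by
  have := (hP.of_mem_convexFaces hA).finiteDimensional_span
  rw [polyDim]
  split_ifs with hempty hmem hmem
  · simp [hempty] at hmem
  · rw [hempty, Submodule.span_empty, finrank_bot]
    simp
  · rw [vectorSpan_eq_span_of_zero_mem hmem]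
  · have hspan : (0 : E) ∉ affineSpan ℝ A := fun h =>
      hmem (inter_affineSpan_of_isExtreme hP.convex hA.2 hA.1 ▸ ⟨h₀, h⟩)
    rw [finrank_span_eq_finrank_vectorSpan_add_one (nonempty_iff_ne_empty.2 hempty) hspan]
    simp

theorem isSimplex_iff_of_mem_convexFaces (hP : IsPolytope P) (h₀ : (0 : E) ∈ P.extremePoints ℝ)
    (hA : A ∈ convexFaces P) :
    IsSimplex A ↔ nonzeroVertexCount A = Module.finrank ℝ (Submodule.span ℝ A) := by
  rw [IsSimplex, and_iff_right (hP.of_mem_convexFaces hA),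
    vertexCount_of_mem_convexFaces hP h₀ hA, polyDim_add_one_of_mem_convexFaces hP h₀.1 hA]
  push_cast
  omega

end Polytope

theorem isExtreme_preimage {𝕜 V V' : Type*} [Semiring 𝕜] [PartialOrder 𝕜] [AddCommMonoid V]
    [Module 𝕜 V] [AddCommMonoid V'] [Module 𝕜 V'] {s t : Set V'} (h : IsExtreme 𝕜 s t)
    (f : V →ₗ[𝕜] V') : IsExtreme 𝕜 (f ⁻¹' s) (f ⁻¹' t) := by
  refine ⟨preimage_mono h.subset, ?_⟩
  rintro x hx y hy _ hz ⟨a, b, ha, hb, hab, rfl⟩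
  exact h.left_mem_of_mem_openSegment hx hy hz ⟨a, b, ha, hb, hab, by simp⟩

section SubdirectSum

variable {W : Type*} [AddCommGroup W] [Module ℝ W] {P A : Set E} {Q B : Set W}

theorem convex_subdirectSum (A : Set E) (B : Set W) : Convex ℝ (subdirectSum A B) :=
  convex_convexHull ℝ _

theorem inl_mem_subdirectSum (B : Set W) {x : E} (hx : x ∈ A) : (x, (0 : W)) ∈ subdirectSum A B :=
  subset_convexHull ℝ _ (Or.inl (mem_image_of_mem _ hx))

theorem subdirectSum_mono (hA : A ⊆ P) (hB : B ⊆ Q) : subdirectSum A B ⊆ subdirectSum P Q :=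
  convexHull_mono (union_subset_union (image_mono hA) (image_mono hB))

theorem swap_image_subdirectSum (A : Set E) (B : Set W) :
    Prod.swap '' subdirectSum A B = subdirectSum B A := by
  rw [subdirectSum, subdirectSum, union_comm ((fun p => (p, (0 : E))) '' B)]
  have h := (LinearEquiv.prodComm ℝ E W).toLinearMap.image_convexHull
    ((fun p => (p, (0 : W))) '' A ∪ (fun q => ((0 : E), q)) '' B)
  rwa [image_union, image_image, image_image] at h

theorem mem_homogenization_subdirectSum {c : ℝ} {z : E × W} :
    (c, z) ∈ homogenization ℝ (subdirectSum A B) ↔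
      ∃ a b, a + b = c ∧ (a, z.1) ∈ homogenization ℝ A ∧ (b, z.2) ∈ homogenization ℝ B := by
  have h : homogenization ℝ (subdirectSum A B) =
      (homogenization ℝ A).map (LinearMap.id.prodMap (LinearMap.inl ℝ E W)) ⊔
        (homogenization ℝ B).map (LinearMap.id.prodMap (LinearMap.inr ℝ E W)) := by
    rw [← homogenization_image, ← homogenization_image, ← homogenization_union]
    exact homogenization_convexHull _
  rw [h, Submodule.mem_sup]
  constructor
  · rintro ⟨_, ⟨⟨a, x⟩, hx, rfl⟩, _, ⟨⟨b, y⟩, hy, rfl⟩, hxy⟩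
    obtain ⟨hab, hz⟩ := Prod.ext_iff.1 hxy
    obtain rfl : z = (x, y) := by simpa using hz.symm
    exact ⟨a, b, hab, hx, hy⟩
  · rintro ⟨a, b, hab, hx, hy⟩
    exact ⟨_, ⟨_, hx, rfl⟩, _, ⟨_, hy, rfl⟩, by simp [hab]⟩

theorem inl_mem_subdirectSum_iff (hA : Convex ℝ A) (hB : Convex ℝ B)
    (h : (0 : W) ∈ B → (0 : E) ∈ A) {x : E} :
    (x, (0 : W)) ∈ subdirectSum A B ↔ x ∈ A := by
  refine ⟨fun hx => ?_, inl_mem_subdirectSum B⟩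
  rw [← one_mk_mem_homogenization_iff (𝕜 := ℝ) (convex_subdirectSum A B),
    mem_homogenization_subdirectSum] at hx
  obtain ⟨a, b, hab, ha, hb⟩ := hx
  rw [← one_mk_mem_homogenization_iff (𝕜 := ℝ) hA]
  rcases (mk_mem_homogenization hB).1 hb with ⟨rfl, -⟩ | ⟨hb₀, hB₀⟩
  · rwa [← hab, add_zero]
  · exact mk_mem_of_mk_mem_of_le (one_mk_mem_homogenization (h (by simpa using hB₀)))
      (by linarith) ha

theorem inr_mem_subdirectSum_iff (hA : Convex ℝ A) (hB : Convex ℝ B)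
    (h : (0 : E) ∈ A → (0 : W) ∈ B) {y : W} :
    ((0 : E), y) ∈ subdirectSum A B ↔ y ∈ B := by
  rw [← inl_mem_subdirectSum_iff hB hA h, ← swap_image_subdirectSum A B]
  exact (Prod.swap_injective.mem_set_image (a := ((0 : E), y))).symm

theorem mem_homogenization_of_mem_homogenization_subdirectSum
    (hP : Convex ℝ P) (hQ : Convex ℝ Q) (hP₀ : (0 : E) ∈ P) (hQ₀ : (0 : W) ∈ Q)
    (hA : A ∈ convexFaces P) (hB : B ∈ convexFaces Q) (h : (0 : E) ∈ A ↔ (0 : W) ∈ B)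
    {a b : ℝ} {x : E} {y : W} (hx : (a, x) ∈ homogenization ℝ P)
    (hy : (b, y) ∈ homogenization ℝ Q)
    (hxy : (a + b, (x, y)) ∈ homogenization ℝ (subdirectSum A B)) :
    (a, x) ∈ homogenization ℝ A ∧ (b, y) ∈ homogenization ℝ B := by
  obtain ⟨a', b', hab, hx', hy'⟩ := mem_homogenization_subdirectSum.1 hxy
  have hAface := (isFaceOf_homogenization_iff hP hA.2).2 hA.1
  have hBface := (isFaceOf_homogenization_iff hQ hB.2).2 hB.1
  have hA₀ := one_mk_mem_homogenization_iff (𝕜 := ℝ) hA.2 (x := 0)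
  have hB₀ := one_mk_mem_homogenization_iff (𝕜 := ℝ) hB.2 (x := 0)
  by_cases h₀ : (0 : E) ∈ A
  · exact ⟨mk_mem_of_isFaceOf_of_one_zero_mem hAface (hA₀.2 h₀) hx' hx,
      mk_mem_of_isFaceOf_of_one_zero_mem hBface (hB₀.2 (h.1 h₀)) hy' hy⟩
  · have ha := le_of_isFaceOf_of_one_zero_notMem hAface (one_mk_mem_homogenization hP₀)
      (mt hA₀.1 h₀) hx' hx
    have hb := le_of_isFaceOf_of_one_zero_notMem hBface (one_mk_mem_homogenization hQ₀)
      (mt hB₀.1 (mt h.2 h₀)) hy' hy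
    obtain rfl : a' = a := by linarith
    obtain rfl : b' = b := by linarith
    exact ⟨hx', hy'⟩

theorem subdirectSum_mem_convexFaces
    (hP : Convex ℝ P) (hQ : Convex ℝ Q) (hP₀ : (0 : E) ∈ P) (hQ₀ : (0 : W) ∈ Q)
    (hA : A ∈ convexFaces P) (hB : B ∈ convexFaces Q) (h : (0 : E) ∈ A ↔ (0 : W) ∈ B) :
    subdirectSum A B ∈ convexFaces (subdirectSum P Q) := by
  refine ⟨?_, convex_subdirectSum A B⟩
  rw [← isFaceOf_homogenization_iff (convex_subdirectSum P Q) (convex_subdirectSum A B)]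
  refine .of_mem_of_add_mem_left
    (homogenization_mono (subdirectSum_mono hA.1.subset hB.1.subset)) ?_
  rintro ⟨c, x, y⟩ ⟨c', x', y'⟩ hz hz' hadd
  obtain ⟨a, b, rfl, hx, hy⟩ := mem_homogenization_subdirectSum.1 hz
  obtain ⟨a', b', rfl, hx', hy'⟩ := mem_homogenization_subdirectSum.1 hz'
  rw [Prod.mk_add_mk, Prod.mk_add_mk, add_add_add_comm] at hadd
  obtain ⟨hxx', hyy'⟩ := mem_homogenization_of_mem_homogenization_subdirectSum hP hQ hP₀ hQ₀ hA hB h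
    (add_mem hx hx') (add_mem hy hy') hadd
  exact mem_homogenization_subdirectSum.2 ⟨a, b, rfl,
    ((isFaceOf_homogenization_iff hP hA.2).2 hA.1).mem_of_add_mem_left hx hx' hxx',
    ((isFaceOf_homogenization_iff hQ hB.2).2 hB.1).mem_of_add_mem_left hy hy' hyy'⟩

theorem preimage_inl_mem_convexFaces (hP : Convex ℝ P) (hQ : Convex ℝ Q)
    (h : (0 : W) ∈ Q → (0 : E) ∈ P) {G : Set (E × W)} (hG : G ∈ convexFaces (subdirectSum P Q)) :
    LinearMap.inl ℝ E W ⁻¹' G ∈ convexFaces P := by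
  have hpre : LinearMap.inl ℝ E W ⁻¹' subdirectSum P Q = P :=
    ext fun _ => inl_mem_subdirectSum_iff hP hQ h
  exact ⟨hpre ▸ isExtreme_preimage hG.1 _, hG.2.linear_preimage _⟩

theorem preimage_inr_mem_convexFaces (hP : Convex ℝ P) (hQ : Convex ℝ Q)
    (h : (0 : E) ∈ P → (0 : W) ∈ Q) {G : Set (E × W)} (hG : G ∈ convexFaces (subdirectSum P Q)) :
    LinearMap.inr ℝ E W ⁻¹' G ∈ convexFaces Q := by
  have hpre : LinearMap.inr ℝ E W ⁻¹' subdirectSum P Q = Q :=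
    ext fun _ => inr_mem_subdirectSum_iff hP hQ h
  exact ⟨hpre ▸ isExtreme_preimage hG.1 _, hG.2.linear_preimage _⟩

theorem subdirectSum_preimage_subset {G : Set (E × W)} (hG : Convex ℝ G) :
    subdirectSum (LinearMap.inl ℝ E W ⁻¹' G) (LinearMap.inr ℝ E W ⁻¹' G) ⊆ G :=
  convexHull_min (union_subset (image_preimage_subset _ _) (image_preimage_subset _ _)) hG

theorem subdirectSum_preimage {G : Set (E × W)} (hG : G ∈ convexFaces (subdirectSum P Q)) :
    subdirectSum (LinearMap.inl ℝ E W ⁻¹' G) (LinearMap.inr ℝ E W ⁻¹' G) = G := by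
  refine (subdirectSum_preimage_subset hG.2).antisymm ?_
  rintro ⟨x, y⟩ hz
  have hface := (isFaceOf_homogenization_iff (convex_subdirectSum P Q) hG.2).2 hG.1
  obtain ⟨a, b, hab, hx, hy⟩ := mem_homogenization_subdirectSum.1
    (one_mk_mem_homogenization (𝕜 := ℝ) (hG.1.subset hz))
  have hx' : (a, (x, (0 : W))) ∈ homogenization ℝ (subdirectSum P Q) :=
    mem_homogenization_subdirectSum.2 ⟨a, 0, add_zero a, hx, zero_mem _⟩
  have hy' : (b, ((0 : E), y)) ∈ homogenization ℝ (subdirectSum P Q) :=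
    mem_homogenization_subdirectSum.2 ⟨0, b, zero_add b, zero_mem _, hy⟩
  obtain ⟨hxG, hyG⟩ := (hface.add_mem_iff_mem hx' hy').1
    (by simpa [hab] using one_mk_mem_homogenization (𝕜 := ℝ) hz)
  rw [← one_mk_mem_homogenization_iff (𝕜 := ℝ) (convex_subdirectSum _ _)]
  exact mem_homogenization_subdirectSum.2 ⟨a, b, hab,
    (mk_mem_homogenization_preimage (f := LinearMap.inl ℝ E W) LinearMap.inl_injective hG.2).2 hxG,
    (mk_mem_homogenization_preimage (f := LinearMap.inr ℝ E W) LinearMap.inr_injective hG.2).2 hyG⟩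

theorem bijOn_subdirectSum_convexFaces
    (hP : Convex ℝ P) (hQ : Convex ℝ Q) (hP₀ : (0 : E) ∈ P) (hQ₀ : (0 : W) ∈ Q) :
    BijOn (fun p : Set E × Set W => subdirectSum p.1 p.2)
      {p | p.1 ∈ convexFaces P ∧ p.2 ∈ convexFaces Q ∧ ((0 : E) ∈ p.1 ↔ (0 : W) ∈ p.2)}
      (convexFaces (subdirectSum P Q)) := by
  refine BijOn.mk ?_ ?_ ?_
  · rintro ⟨A, B⟩ ⟨hA, hB, h⟩
    exact subdirectSum_mem_convexFaces hP hQ hP₀ hQ₀ hA hB h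
  · refine LeftInvOn.injOn
      (f₁' := fun G => (LinearMap.inl ℝ E W ⁻¹' G, LinearMap.inr ℝ E W ⁻¹' G)) ?_
    rintro ⟨A, B⟩ ⟨hA, hB, h⟩
    exact Prod.ext (ext fun _ => inl_mem_subdirectSum_iff hA.2 hB.2 h.2)
      (ext fun _ => inr_mem_subdirectSum_iff hA.2 hB.2 h.1)
  · intro G hG
    exact ⟨(LinearMap.inl ℝ E W ⁻¹' G, LinearMap.inr ℝ E W ⁻¹' G),
      ⟨preimage_inl_mem_convexFaces hP hQ (fun _ => hP₀) hG,
        preimage_inr_mem_convexFaces hP hQ (fun _ => hQ₀) hG, Iff.rfl⟩, subdirectSum_preimage hG⟩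

theorem zero_mem_subdirectSum_iff (hA : Convex ℝ A) (hB : Convex ℝ B)
    (h : (0 : W) ∈ B → (0 : E) ∈ A) : (0 : E × W) ∈ subdirectSum A B ↔ (0 : E) ∈ A :=
  inl_mem_subdirectSum_iff hA hB h

theorem subdirectSum_convexHull (s : Set E) (t : Set W) :
    subdirectSum (convexHull ℝ s) (convexHull ℝ t) = subdirectSum s t := by
  have hs := (LinearMap.inl ℝ E W).image_convexHull s
  have ht := (LinearMap.inr ℝ E W).image_convexHull t
  simp only [LinearMap.coe_inl, LinearMap.coe_inr] at hs ht
  rw [subdirectSum, hs, ht, convexHull_convexHull_union_left, convexHull_convexHull_union_right]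
  rfl

theorem isPolytope_subdirectSum (hA : IsPolytope A) (hB : IsPolytope B) :
    IsPolytope (subdirectSum A B) := by
  classical
  obtain ⟨S, rfl⟩ := hA
  obtain ⟨T, rfl⟩ := hB
  refine ⟨S.image (fun x => (x, (0 : W))) ∪ T.image (fun y => ((0 : E), y)), ?_⟩
  rw [subdirectSum_convexHull, Finset.coe_union, Finset.coe_image, Finset.coe_image]
  rfl

theorem span_subdirectSum (A : Set E) (B : Set W) :
    Submodule.span ℝ (subdirectSum A B) = (Submodule.span ℝ A).prod (Submodule.span ℝ B) := by
  rw [← LinearMap.span_inl_union_inr]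
  exact span_convexHull _

theorem finrank_span_subdirectSum (hA : IsPolytope A) (hB : IsPolytope B) :
    Module.finrank ℝ (Submodule.span ℝ (subdirectSum A B)) =
      Module.finrank ℝ (Submodule.span ℝ A) + Module.finrank ℝ (Submodule.span ℝ B) := by
  have := hA.finiteDimensional_span
  have := hB.finiteDimensional_span
  rw [span_subdirectSum, finrank_submodule_prod]

theorem inl_mem_extremePoints_subdirectSum_iff (hP : Convex ℝ P) (hQ : Convex ℝ Q)
    (hP₀ : (0 : E) ∈ P.extremePoints ℝ) (hQ₀ : (0 : W) ∈ Q.extremePoints ℝ) {x : E} :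
    (x, (0 : W)) ∈ (subdirectSum P Q).extremePoints ℝ ↔ x ∈ P.extremePoints ℝ := by
  rw [← isExtreme_singleton, ← isExtreme_singleton]
  constructor
  · intro hx
    have hpre : LinearMap.inl ℝ E W ⁻¹' {(x, 0)} = {x} := by ext; simp
    exact hpre ▸ (preimage_inl_mem_convexFaces hP hQ (fun _ => hP₀.1)
      ⟨hx, convex_singleton _⟩).1
  · intro hx
    suffices h : ∃ B ∈ convexFaces Q, ((0 : E) ∈ ({x} : Set E) ↔ (0 : W) ∈ B) ∧
        subdirectSum {x} B = {(x, 0)} by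
      obtain ⟨B, hB, h₀, hxB⟩ := h
      rw [← hxB]
      exact (subdirectSum_mem_convexFaces hP hQ hP₀.1 hQ₀.1 ⟨hx, convex_singleton x⟩ hB h₀).1
    rcases eq_or_ne x 0 with rfl | hx₀
    · exact ⟨{0}, ⟨isExtreme_singleton.2 hQ₀, convex_singleton 0⟩, by simp, by simp [subdirectSum]⟩
    · refine ⟨∅, ⟨⟨empty_subset Q, fun _ _ _ _ _ h => h.elim⟩, convex_empty⟩, ?_, ?_⟩
      · simpa using hx₀.symm
      · simp [subdirectSum]

theorem inr_mem_extremePoints_subdirectSum_iff (hP : Convex ℝ P) (hQ : Convex ℝ Q)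
    (hP₀ : (0 : E) ∈ P.extremePoints ℝ) (hQ₀ : (0 : W) ∈ Q.extremePoints ℝ) {y : W} :
    ((0 : E), y) ∈ (subdirectSum P Q).extremePoints ℝ ↔ y ∈ Q.extremePoints ℝ := by
  have hswap : Prod.swap '' (subdirectSum P Q).extremePoints ℝ =
      (Prod.swap '' subdirectSum P Q).extremePoints ℝ :=
    image_extremePoints (LinearEquiv.prodComm ℝ E W) (subdirectSum P Q)
  rw [swap_image_subdirectSum] at hswap
  rw [← inl_mem_extremePoints_subdirectSum_iff hQ hP hQ₀ hP₀, ← hswap]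
  exact (Prod.swap_injective.mem_set_image (a := ((0 : E), y))).symm

theorem extremePoints_subdirectSum (hP : Convex ℝ P) (hQ : Convex ℝ Q)
    (hP₀ : (0 : E) ∈ P.extremePoints ℝ) (hQ₀ : (0 : W) ∈ Q.extremePoints ℝ) :
    (subdirectSum P Q).extremePoints ℝ =
      (fun x => (x, (0 : W))) '' P.extremePoints ℝ ∪
        (fun y => ((0 : E), y)) '' Q.extremePoints ℝ := by
  apply Subset.antisymm
  · intro z hz
    rcases extremePoints_convexHull_subset hz with ⟨x, -, rfl⟩ | ⟨y, -, rfl⟩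
    · exact Or.inl ⟨x, (inl_mem_extremePoints_subdirectSum_iff hP hQ hP₀ hQ₀).1 hz, rfl⟩
    · exact Or.inr ⟨y, (inr_mem_extremePoints_subdirectSum_iff hP hQ hP₀ hQ₀).1 hz, rfl⟩
  · rintro _ (⟨x, hx, rfl⟩ | ⟨y, hy, rfl⟩)
    · exact (inl_mem_extremePoints_subdirectSum_iff hP hQ hP₀ hQ₀).2 hx
    · exact (inr_mem_extremePoints_subdirectSum_iff hP hQ hP₀ hQ₀).2 hy

theorem extremePoints_subdirectSum_of_mem_convexFaces (hP : Convex ℝ P) (hQ : Convex ℝ Q)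
    (hP₀ : (0 : E) ∈ P.extremePoints ℝ) (hQ₀ : (0 : W) ∈ Q.extremePoints ℝ)
    (hA : A ∈ convexFaces P) (hB : B ∈ convexFaces Q) (h : (0 : E) ∈ A ↔ (0 : W) ∈ B) :
    (subdirectSum A B).extremePoints ℝ =
      (fun x => (x, (0 : W))) '' A.extremePoints ℝ ∪
        (fun y => ((0 : E), y)) '' B.extremePoints ℝ := by
  have hpreA : (fun x => (x, (0 : W))) ⁻¹' subdirectSum A B = A :=
    ext fun _ => inl_mem_subdirectSum_iff hA.2 hB.2 h.2
  have hpreB : (fun y => ((0 : E), y)) ⁻¹' subdirectSum A B = B :=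
    ext fun _ => inr_mem_subdirectSum_iff hA.2 hB.2 h.1
  rw [(subdirectSum_mem_convexFaces hP hQ hP₀.1 hQ₀.1 hA hB h).1.extremePoints_eq,
    extremePoints_subdirectSum hP hQ hP₀ hQ₀, inter_union_distrib_left,
    ← image_preimage_inter, ← image_preimage_inter, hpreA, hpreB,
    hA.1.extremePoints_eq, hB.1.extremePoints_eq]

theorem nonzeroVertexCount_subdirectSum (hP : IsPolytope P) (hQ : IsPolytope Q)
    (hP₀ : (0 : E) ∈ P.extremePoints ℝ) (hQ₀ : (0 : W) ∈ Q.extremePoints ℝ)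
    (hA : A ∈ convexFaces P) (hB : B ∈ convexFaces Q) (h : (0 : E) ∈ A ↔ (0 : W) ∈ B) :
    nonzeroVertexCount (subdirectSum A B) = nonzeroVertexCount A + nonzeroVertexCount B := by
  have hinl : Function.Injective fun x : E => (x, (0 : W)) := LinearMap.inl_injective (R := ℝ)
  have hinr : Function.Injective fun y : W => ((0 : E), y) := LinearMap.inr_injective (R := ℝ)
  have hfinA := (hP.of_mem_convexFaces hA).finite_extremePoints.sdiff (t := {0})
  have hfinB := (hQ.of_mem_convexFaces hB).finite_extremePoints.sdiff (t := {0})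
  have hunion : (subdirectSum A B).extremePoints ℝ \ {0} =
      (fun x => (x, (0 : W))) '' (A.extremePoints ℝ \ {0}) ∪
        (fun y => ((0 : E), y)) '' (B.extremePoints ℝ \ {0}) := by
    rw [extremePoints_subdirectSum_of_mem_convexFaces hP.convex hQ.convex hP₀ hQ₀ hA hB h,
      union_sdiff_distrib, image_sdiff hinl, image_sdiff hinr, image_singleton, image_singleton]
    rfl
  have hdisj : Disjoint ((fun x => (x, (0 : W))) '' (A.extremePoints ℝ \ {0}))
      ((fun y => ((0 : E), y)) '' (B.extremePoints ℝ \ {0})) := by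
    rw [disjoint_left]
    rintro _ ⟨x, hx, rfl⟩ ⟨y, -, hxy⟩
    exact hx.2 (congrArg Prod.fst hxy).symm
  rw [nonzeroVertexCount, hunion, ncard_union_eq hdisj (hfinA.image _) (hfinB.image _),
    ncard_image_of_injective _ hinl, ncard_image_of_injective _ hinr]
  rfl

theorem zero_mem_extremePoints_subdirectSum (hP : Convex ℝ P) (hQ : Convex ℝ Q)
    (hP₀ : (0 : E) ∈ P.extremePoints ℝ) (hQ₀ : (0 : W) ∈ Q.extremePoints ℝ) :
    (0 : E × W) ∈ (subdirectSum P Q).extremePoints ℝ :=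
  (inl_mem_extremePoints_subdirectSum_iff hP hQ hP₀ hQ₀).2 hP₀

open Classical in
theorem vertexCount_subdirectSum (hP : IsPolytope P) (hQ : IsPolytope Q)
    (hP₀ : (0 : E) ∈ P.extremePoints ℝ) (hQ₀ : (0 : W) ∈ Q.extremePoints ℝ)
    (hA : A ∈ convexFaces P) (hB : B ∈ convexFaces Q) (h : (0 : E) ∈ A ↔ (0 : W) ∈ B) :
    vertexCount (subdirectSum A B) + (if (0 : E) ∈ A then 1 else 0) =
      vertexCount A + vertexCount B := by
  rw [vertexCount_of_mem_convexFaces (isPolytope_subdirectSum hP hQ)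
      (zero_mem_extremePoints_subdirectSum hP.convex hQ.convex hP₀ hQ₀)
      (subdirectSum_mem_convexFaces hP.convex hQ.convex hP₀.1 hQ₀.1 hA hB h),
    nonzeroVertexCount_subdirectSum hP hQ hP₀ hQ₀ hA hB h,
    vertexCount_of_mem_convexFaces hP hP₀ hA, vertexCount_of_mem_convexFaces hQ hQ₀ hB,
    if_congr (zero_mem_subdirectSum_iff hA.2 hB.2 h.2) rfl rfl, if_congr h.symm rfl rfl]
  ring

theorem isSimplex_subdirectSum_iff (hP : IsPolytope P) (hQ : IsPolytope Q)
    (hP₀ : (0 : E) ∈ P.extremePoints ℝ) (hQ₀ : (0 : W) ∈ Q.extremePoints ℝ)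
    (hA : A ∈ convexFaces P) (hB : B ∈ convexFaces Q) (h : (0 : E) ∈ A ↔ (0 : W) ∈ B) :
    IsSimplex (subdirectSum A B) ↔ IsSimplex A ∧ IsSimplex B := by
  have hA' := hP.of_mem_convexFaces hA
  have hB' := hQ.of_mem_convexFaces hB
  rw [isSimplex_iff_of_mem_convexFaces (isPolytope_subdirectSum hP hQ)
      (zero_mem_extremePoints_subdirectSum hP.convex hQ.convex hP₀ hQ₀)
      (subdirectSum_mem_convexFaces hP.convex hQ.convex hP₀.1 hQ₀.1 hA hB h),
    isSimplex_iff_of_mem_convexFaces hP hP₀ hA, isSimplex_iff_of_mem_convexFaces hQ hQ₀ hB,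
    nonzeroVertexCount_subdirectSum hP hQ hP₀ hQ₀ hA hB h, finrank_span_subdirectSum hA' hB']
  have hleA := hA'.finrank_span_le_nonzeroVertexCount
  have hleB := hB'.finrank_span_le_nonzeroVertexCount
  omega

end SubdirectSum

section Counting

variable {W : Type*} [AddCommGroup W] [Module ℝ W] {P A : Set E} {Q : Set W}

theorem ncard_sep_prod_add_eq {α β : Type*} {s : Set α} {t : Set β} (hs : s.Finite) (ht : t.Finite)
    (f : α → ℕ) (g : β → ℕ) (n : ℕ) :
    {p ∈ s ×ˢ t | f p.1 + g p.2 = n}.ncard =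
      ∑ a ∈ Finset.range (n + 1), {x ∈ s | f x = a}.ncard * {y ∈ t | g y = n - a}.ncard := by
  have hunion : {p ∈ s ×ˢ t | f p.1 + g p.2 = n} =
      ⋃ i ∈ (Finset.HasAntidiagonal.antidiagonal n : Set (ℕ × ℕ)),
        {x ∈ s | f x = i.1} ×ˢ {y ∈ t | g y = i.2} := by
    ext ⟨x, y⟩
    simp only [mem_iUnion, Finset.mem_coe, Finset.HasAntidiagonal.mem_antidiagonal]
    exact ⟨fun ⟨⟨hx, hy⟩, h⟩ => ⟨(f x, g y), h, ⟨hx, rfl⟩, hy, rfl⟩,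
      fun ⟨i, hi, ⟨hx, hf⟩, hy, hg⟩ => ⟨⟨hx, hy⟩, by rw [hf, hg, hi]⟩⟩
  rw [hunion, (Finset.finite_toSet _).ncard_biUnion
      (fun i _ => (hs.sep _).prod (ht.sep _)), finsum_mem_coe_finset,
    ← Finset.Nat.sum_antidiagonal_eq_sum_range_succ fun a b =>
      {x ∈ s | f x = a}.ncard * {y ∈ t | g y = b}.ncard]
  · simp only [ncard_prod]
  · intro i _ j _ hij
    refine disjoint_left.2 fun p hpi hpj => hij (Prod.ext ?_ ?_)
    · exact hpi.1.2.symm.trans hpj.1.2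
    · exact hpi.2.2.symm.trans hpj.2.2

theorem ncard_sep_eq_of_bijOn_prod {α β γ : Type*} {s : Set α} {t : Set β} {u : Set γ}
    {φ : α × β → γ} (hφ : BijOn φ (s ×ˢ t) u) (hs : s.Finite) (ht : t.Finite) {f : α → ℕ}
    {g : β → ℕ} {h : γ → ℕ} {c : ℕ} (hadd : ∀ p ∈ s ×ˢ t, h (φ p) + c = f p.1 + g p.2) (n : ℕ) :
    {z ∈ u | h z = n}.ncard = ∑ a ∈ Finset.range (n + c + 1),
      {x ∈ s | f x = a}.ncard * {y ∈ t | g y = n + c - a}.ncard := by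
  rw [← ncard_sep_prod_add_eq hs ht, ← (hφ.subset_right (sep_subset u _)).ncard_eq]
  congr 1
  ext p
  constructor
  · rintro ⟨hp, -, hn⟩
    exact ⟨hp, by rw [← hadd p hp, hn]⟩
  · rintro ⟨hp, hn⟩
    exact ⟨hp, hφ.mapsTo hp, Nat.add_right_cancel ((hadd p hp).trans hn)⟩

/-- The simplex faces of `P`, among them the empty face. -/
def simplexFaces (P : Set E) : Set (Set E) := {A | IsFaceOf A P ∧ IsSimplex A}

theorem mem_simplexFaces_iff : A ∈ simplexFaces P ↔ A ∈ convexFaces P ∧ IsSimplex A :=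
  ⟨fun h => ⟨⟨h.1, h.2.1.convex⟩, h.2⟩, fun h => ⟨h.1.1, h.2⟩⟩

theorem IsPolytope.finite_simplexFaces (hP : IsPolytope P) : (simplexFaces P).Finite :=
  hP.finite_convexFaces.subset fun _ hA => (mem_simplexFaces_iff.1 hA).1

theorem IsSimplex.polyDim_eq_iff (hA : IsSimplex A) {n : ℕ} :
    polyDim A = (n : ℤ) - 1 ↔ vertexCount A = n := by
  rw [eq_sub_iff_add_eq, ← hA.2, Nat.cast_inj]

theorem setOf_polyDim_eq_simplexFaces (P : Set E) (p : Set E → Prop) (n : ℕ) :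
    {A | IsFaceOf A P ∧ IsSimplex A ∧ polyDim A = (n : ℤ) - 1 ∧ p A} =
      {A ∈ {A ∈ simplexFaces P | p A} | vertexCount A = n} := by
  ext A
  constructor
  · rintro ⟨hA, hsimplex, hdim, hp⟩
    exact ⟨⟨⟨hA, hsimplex⟩, hp⟩, hsimplex.polyDim_eq_iff.1 hdim⟩
  · rintro ⟨⟨⟨hA, hsimplex⟩, hp⟩, hcard⟩
    exact ⟨hA, hsimplex, hsimplex.polyDim_eq_iff.2 hcard, hp⟩

theorem simpCount0_eq_ncard (P : Set E) (n : ℕ) :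
    simpCount0 P ((n : ℤ) - 1) =
      {A ∈ {A ∈ simplexFaces P | (0 : E) ∈ A} | vertexCount A = n}.ncard :=
  congrArg ncard (setOf_polyDim_eq_simplexFaces P (fun A => (0 : E) ∈ A) n)

theorem simpCount1_eq_ncard (P : Set E) (n : ℕ) :
    simpCount1 P ((n : ℤ) - 1) =
      {A ∈ {A ∈ simplexFaces P | (0 : E) ∉ A} | vertexCount A = n}.ncard :=
  congrArg ncard (setOf_polyDim_eq_simplexFaces P (fun A => (0 : E) ∉ A) n)

theorem IsPolytope.simpCount_eq_simpCount0_add_simpCount1 (hP : IsPolytope P) (k : ℤ) :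
    simpCount P k = simpCount0 P k + simpCount1 P k := by
  have hfin : {A | IsFaceOf A P ∧ IsSimplex A ∧ polyDim A = k}.Finite :=
    hP.finite_simplexFaces.subset fun _ hA => ⟨hA.1, hA.2.1⟩
  rw [simpCount, ← ncard_inter_add_ncard_sdiff_eq_ncard _ {A | (0 : E) ∈ A} hfin]
  simp only [simpCount0, simpCount1, inter_def, sdiff_eq, mem_ofPred_eq, and_assoc]
  rfl

theorem bijOn_subdirectSum_simplexFaces (hP : IsPolytope P) (hQ : IsPolytope Q)
    (hP₀ : (0 : E) ∈ P.extremePoints ℝ) (hQ₀ : (0 : W) ∈ Q.extremePoints ℝ) :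
    BijOn (fun p : Set E × Set W => subdirectSum p.1 p.2)
      {p ∈ simplexFaces P ×ˢ simplexFaces Q | (0 : E) ∈ p.1 ↔ (0 : W) ∈ p.2}
      (simplexFaces (subdirectSum P Q)) := by
  have hbij := bijOn_subdirectSum_convexFaces hP.convex hQ.convex hP₀.1 hQ₀.1
  convert hbij.subset_right (r := simplexFaces (subdirectSum P Q))
    (fun _ hG => (mem_simplexFaces_iff.1 hG).1) using 1
  ext ⟨A, B⟩
  constructor
  · rintro ⟨⟨hA, hB⟩, h⟩
    rw [mem_simplexFaces_iff] at hA hB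
    exact ⟨⟨hA.1, hB.1, h⟩, mem_simplexFaces_iff.2 ⟨hbij.mapsTo ⟨hA.1, hB.1, h⟩,
      (isSimplex_subdirectSum_iff hP hQ hP₀ hQ₀ hA.1 hB.1 h).2 ⟨hA.2, hB.2⟩⟩⟩
  · rintro ⟨⟨hA, hB, h⟩, hG⟩
    obtain ⟨hA', hB'⟩ := (isSimplex_subdirectSum_iff hP hQ hP₀ hQ₀ hA hB h).1 hG.2
    exact ⟨⟨mem_simplexFaces_iff.2 ⟨hA, hA'⟩, mem_simplexFaces_iff.2 ⟨hB, hB'⟩⟩, h⟩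

theorem bijOn_subdirectSum_simplexFaces_zero_mem (hP : IsPolytope P) (hQ : IsPolytope Q)
    (hP₀ : (0 : E) ∈ P.extremePoints ℝ) (hQ₀ : (0 : W) ∈ Q.extremePoints ℝ) :
    BijOn (fun p : Set E × Set W => subdirectSum p.1 p.2)
      ({A ∈ simplexFaces P | (0 : E) ∈ A} ×ˢ {B ∈ simplexFaces Q | (0 : W) ∈ B})
      {G ∈ simplexFaces (subdirectSum P Q) | (0 : E × W) ∈ G} := by
  have hbij := bijOn_subdirectSum_simplexFaces hP hQ hP₀ hQ₀
  convert hbij.subset_right (sep_subset _ _) using 1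
  ext ⟨A, B⟩
  constructor
  · rintro ⟨⟨hA, hA₀⟩, hB, hB₀⟩
    have hAB := hbij.mapsTo (x := (A, B)) ⟨⟨hA, hB⟩, iff_of_true hA₀ hB₀⟩
    exact ⟨⟨⟨hA, hB⟩, iff_of_true hA₀ hB₀⟩, hAB, inl_mem_subdirectSum B hA₀⟩
  · rintro ⟨⟨⟨hA, hB⟩, h⟩, -, h₀⟩
    have hA₀ := (zero_mem_subdirectSum_iff hA.2.1.convex hB.2.1.convex h.2).1 h₀
    exact ⟨⟨hA, hA₀⟩, hB, h.1 hA₀⟩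

theorem bijOn_subdirectSum_simplexFaces_zero_notMem (hP : IsPolytope P) (hQ : IsPolytope Q)
    (hP₀ : (0 : E) ∈ P.extremePoints ℝ) (hQ₀ : (0 : W) ∈ Q.extremePoints ℝ) :
    BijOn (fun p : Set E × Set W => subdirectSum p.1 p.2)
      ({A ∈ simplexFaces P | (0 : E) ∉ A} ×ˢ {B ∈ simplexFaces Q | (0 : W) ∉ B})
      {G ∈ simplexFaces (subdirectSum P Q) | (0 : E × W) ∉ G} := by
  have hbij := bijOn_subdirectSum_simplexFaces hP hQ hP₀ hQ₀
  convert hbij.subset_right (sep_subset _ _) using 1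
  ext ⟨A, B⟩
  constructor
  · rintro ⟨⟨hA, hA₀⟩, hB, hB₀⟩
    have hAB := hbij.mapsTo (x := (A, B)) ⟨⟨hA, hB⟩, iff_of_false hA₀ hB₀⟩
    exact ⟨⟨⟨hA, hB⟩, iff_of_false hA₀ hB₀⟩, hAB, mt (zero_mem_subdirectSum_iff
      hA.2.1.convex hB.2.1.convex (fun h => absurd h hB₀)).1 hA₀⟩
  · rintro ⟨⟨⟨hA, hB⟩, h⟩, -, h₀⟩
    have hA₀ := mt (zero_mem_subdirectSum_iff hA.2.1.convex hB.2.1.convex h.2).2 h₀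
    exact ⟨⟨hA, hA₀⟩, hB, mt h.2 hA₀⟩

theorem simpCount0_subdirectSum (hP : IsPolytope P) (hQ : IsPolytope Q)
    (hP₀ : (0 : E) ∈ P.extremePoints ℝ) (hQ₀ : (0 : W) ∈ Q.extremePoints ℝ) (j : ℕ) :
    simpCount0 (subdirectSum P Q) ((j : ℤ) - 1) = ∑ a ∈ Finset.range (j + 2),
      simpCount0 P ((a : ℤ) - 1) * simpCount0 Q (((j + 1 - a : ℕ) : ℤ) - 1) := by
  simp only [simpCount0_eq_ncard]
  refine ncard_sep_eq_of_bijOn_prod (bijOn_subdirectSum_simplexFaces_zero_mem hP hQ hP₀ hQ₀)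
    (hP.finite_simplexFaces.sep _) (hQ.finite_simplexFaces.sep _) (c := 1) ?_ j
  rintro ⟨A, B⟩ ⟨⟨hA, hA₀⟩, hB, hB₀⟩
  have h := vertexCount_subdirectSum hP hQ hP₀ hQ₀ (mem_simplexFaces_iff.1 hA).1
    (mem_simplexFaces_iff.1 hB).1 (iff_of_true hA₀ hB₀)
  rwa [if_pos hA₀] at h

theorem simpCount1_subdirectSum (hP : IsPolytope P) (hQ : IsPolytope Q)
    (hP₀ : (0 : E) ∈ P.extremePoints ℝ) (hQ₀ : (0 : W) ∈ Q.extremePoints ℝ) (j : ℕ) :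
    simpCount1 (subdirectSum P Q) ((j : ℤ) - 1) = ∑ a ∈ Finset.range (j + 1),
      simpCount1 P ((a : ℤ) - 1) * simpCount1 Q (((j - a : ℕ) : ℤ) - 1) := by
  simp only [simpCount1_eq_ncard]
  refine ncard_sep_eq_of_bijOn_prod (bijOn_subdirectSum_simplexFaces_zero_notMem hP hQ hP₀ hQ₀)
    (hP.finite_simplexFaces.sep _) (hQ.finite_simplexFaces.sep _) (c := 0) ?_ j
  rintro ⟨A, B⟩ ⟨⟨hA, hA₀⟩, hB, hB₀⟩
  have h := vertexCount_subdirectSum hP hQ hP₀ hQ₀ (mem_simplexFaces_iff.1 hA).1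
    (mem_simplexFaces_iff.1 hB).1 (iff_of_false hA₀ hB₀)
  rwa [if_neg hA₀] at h

end Counting

/-- the simplex-counting polynomial identity
`S_{P∨Q}(x) = (1/x)·S⁰_P(x)·S⁰_Q(x) + S¹_P(x)·S¹_Q(x)`, stated coefficient-wise:
the coefficient of `x^j` counts simplex faces of dimension `j - 1`. -/
theorem subdirectSum_simplex_poly {E F : Type*} [AddCommGroup E] [Module ℝ E]
    [AddCommGroup F] [Module ℝ F] (P : Set E) (Q : Set F)
    (hP : IsPolytope P) (hQ : IsPolytope Q)
    (h0P : (0 : E) ∈ P.extremePoints ℝ) (h0Q : (0 : F) ∈ Q.extremePoints ℝ) :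
    ∀ j : ℕ, simpCount (subdirectSum P Q) ((j : ℤ) - 1)
      = (∑ a ∈ Finset.range (j + 2),
          simpCount0 P ((a : ℤ) - 1) * simpCount0 Q (((j + 1 - a : ℕ) : ℤ) - 1))
        + ∑ a ∈ Finset.range (j + 1),
          simpCount1 P ((a : ℤ) - 1) * simpCount1 Q (((j - a : ℕ) : ℤ) - 1) := by
  intro j
  rw [(isPolytope_subdirectSum hP hQ).simpCount_eq_simpCount0_add_simpCount1,
    simpCount0_subdirectSum hP hQ h0P h0Q, simpCount1_subdirectSum hP hQ h0P h0Q]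
end

section
/- For any finite poset P satisfying s_k(O(P)) ≤ s_k(C(P)) for all k, the quantities α_P(x) := (1/x)S⁰_{C(P)}(x), β_P(x) := (1/x)S⁰_{O(P)}(x), γ_P(x) := S¹_{O(P)}(x), δ_P(x) := S¹_{C(P)}(x) satisfy 0 ≤ α_P ≤ β_P ≤ γ_P ≤ δ_P and 0 ≤ x(β_P − α_P) ≤ δ_P − γ_P, coefficient-wise. -/
open Set

variable {E : Type*} [AddCommGroup E] [Module ℝ E]

/-- The order polytope of a poset. -/
def orderPolytope (α : Type*) [PartialOrder α] : Set (α → ℝ) :=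
  {x | (∀ p, 0 ≤ x p ∧ x p ≤ 1) ∧ ∀ p q : α, p ≤ q → x p ≤ x q}

/-- The chain polytope of a poset. -/
def chainPolytope (α : Type*) [PartialOrder α] : Set (α → ℝ) :=
  {x | (∀ p, 0 ≤ x p) ∧ ∀ s : Finset α, IsChain (· ≤ ·) (s : Set α) → ∑ p ∈ s, x p ≤ 1}

open Classical in
/-- Characteristic vector of a subset. -/
noncomputable def chi {α : Type*} (S : Set α) : α → ℝ := fun p => if p ∈ S then 1 else 0

/-!
The nonzero vertices of a simplex face of `C(P)` through the origin are unit vectors, and their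
labels form a chain: if `p` and `q` were incomparable, `χ {p, q}` would be a further vertex of the
face, linearly dependent on `χ {p}` and `χ {q}`. Conversely, for a chain `S` the filters `Ici p`
with `p ∈ S` are nested, and together with the origin their characteristic vectors span a simplex
face of `O(P)`. Hence `s⁰ₖ(C(P)) ≤ s⁰ₖ(O(P))`. Passing from a simplex face through the origin to
its facet opposite the origin gives `s⁰ₖ ≤ s¹ₖ₋₁`, and `s = s⁰ + s¹` does the rest.
-/

open scoped Topology

section ExtremeSubsets

theorem mem_extremePoints_convexHull_insert_s15 {v : E} {T : Set E} (hv : v ∉ convexHull ℝ T) :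
    v ∈ (convexHull ℝ (insert v T)).extremePoints ℝ := by
  rcases T.eq_empty_or_nonempty with rfl | hT
  · simp
  refine ⟨subset_convexHull ℝ _ (mem_insert v T), ?_⟩
  rw [convexHull_insert hT]
  simp only [mem_convexJoin, mem_singleton_iff, exists_eq_left]
  rintro _ ⟨b, hb, s, s', hs, hs', hss', rfl⟩ _ ⟨c, hc, t, t', ht, ht', htt', rfl⟩
    ⟨a, a', ha, ha', haa', hv_eq⟩
  obtain rfl | hs'_pos := hs'.eq_or_lt
  · simp [show s = 1 by linarith]
  have hw : 0 < a * s' + a' * t' := by positivity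
  have hv_hull : ((a * s') / (a * s' + a' * t')) • b + ((a' * t') / (a * s' + a' * t')) • c
      ∈ convexHull ℝ T :=
    convex_convexHull ℝ T hb hc (by positivity) (by positivity) (by field_simp)
  have hsum : (a * s' + a' * t') • v = (a * s') • b + (a' * t') • c := by
    obtain rfl : s = 1 - s' := by linarith
    obtain rfl : t = 1 - t' := by linarith
    obtain rfl : a = 1 - a' := by linarith
    linear_combination (norm := module) (-1 : ℝ) • hv_eq
  rw [div_eq_inv_mul, div_eq_inv_mul, mul_smul, mul_smul _ (a' * t'), ← smul_add, ← hsum,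
    inv_smul_smul₀ hw.ne'] at hv_hull
  exact absurd hv_hull hv

theorem convexHull_extremePoints_convexHull_s15 {S : Set E} (hS : S.Finite) :
    convexHull ℝ ((convexHull ℝ S).extremePoints ℝ) = convexHull ℝ S := by
  lift S to Finset E using hS
  induction S using Finset.strongInduction with | H S ih => ?_
  by_cases hred : ∃ v ∈ S, v ∈ convexHull ℝ ((S : Set E) \ {v})
  · classical
    obtain ⟨v, hvS, hv⟩ := hred
    have herase : convexHull ℝ (S.erase v : Set E) = convexHull ℝ (S : Set E) := by
      rw [Finset.coe_erase]
      refine (convexHull_mono sdiff_subset).antisymm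
        (convexHull_min (fun w hw => ?_) (convex_convexHull ℝ _))
      obtain rfl | hwv := eq_or_ne w v
      · exact hv
      · exact subset_convexHull ℝ _ ⟨hw, hwv⟩
    rw [← herase, ih _ (Finset.erase_ssubset hvS)]
  · push Not at hred
    refine (convexHull_min extremePoints_subset (convex_convexHull ℝ _)).antisymm
      (convexHull_mono fun v hv => ?_)
    simpa only [insert_sdiff_self_of_mem hv] using mem_extremePoints_convexHull_insert_s15 (hred v hv)

theorem convexHull_inter_eq_of_isExtreme {S F : Set E} (hF : IsExtreme ℝ (convexHull ℝ S) F)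
    (hconv : Convex ℝ F) : convexHull ℝ (S ∩ F) = F := by
  refine (convexHull_min inter_subset_right hconv).antisymm fun x hx => ?_
  have hcompl : convexHull ℝ (S \ F) ⊆ convexHull ℝ S \ F :=
    convexHull_min (sdiff_subset_sdiff_left (subset_convexHull ℝ S))
      (hF.convex_sdiff (convex_convexHull ℝ S))
  have hxS : x ∈ convexHull ℝ (S ∩ F ∪ S \ F) := by
    rw [inter_union_sdiff]; exact hF.1 hx
  rcases (S ∩ F).eq_empty_or_nonempty with hin | hin
  · rw [hin, empty_union] at hxS
    exact absurd hx (hcompl hxS).2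
  rcases (S \ F).eq_empty_or_nonempty with hout | hout
  · rwa [hout, union_empty] at hxS
  rw [convexHull_union hin hout, mem_convexJoin] at hxS
  obtain ⟨y, hy, z, hz, hxyz⟩ := hxS
  rw [← insert_endpoints_openSegment] at hxyz
  rcases hxyz with rfl | rfl | hxyz
  · exact hy
  · exact absurd hx (hcompl hz).2
  · exact absurd (hF.right_mem_of_mem_openSegment
      (convexHull_mono inter_subset_left hy) (hcompl hz).1 hx hxyz) (hcompl hz).2

theorem isExtreme_convexHull_insert {v : E} {T : Set E} (hv : v ∉ affineSpan ℝ T) :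
    IsExtreme ℝ (convexHull ℝ (insert v T)) (convexHull ℝ T) := by
  refine ⟨convexHull_mono (subset_insert v T), ?_⟩
  rcases T.eq_empty_or_nonempty with rfl | hT
  · simp
  obtain ⟨u, hu⟩ := hT
  have huv : v -ᵥ u ∉ vectorSpan ℝ T := by
    rwa [← direction_affineSpan,
      AffineSubspace.vsub_right_mem_direction_iff_mem (mem_affineSpan ℝ hu)]
  obtain ⟨f, hfv, hfT⟩ := Submodule.exists_le_ker_of_notMem huv
  have hf : ∀ x ∈ convexHull ℝ T, f x = f u := fun x hx => by
    have : x -ᵥ u ∈ vectorSpan ℝ T :=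
      vsub_mem_vectorSpan_of_mem_affineSpan_of_mem_affineSpan (convexHull_subset_affineSpan T hx)
        (mem_affineSpan ℝ hu)
    simpa [sub_eq_zero] using hfT this
  rw [convexHull_insert ⟨u, hu⟩]
  simp only [mem_convexJoin, mem_singleton_iff, exists_eq_left]
  rintro _ ⟨b, hb, s, s', hs, hs', hss', rfl⟩ _ ⟨c, hc, t, t', ht, ht', htt', rfl⟩ z hz
    ⟨a, a', ha, ha', haa', rfl⟩
  have hzero : (a * s + a' * t) * f (v -ᵥ u) = 0 := by
    have := hf _ hz
    simp only [map_add, map_smul, smul_eq_mul, hf b hb, hf c hc, vsub_eq_sub, map_sub] at this ⊢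
    obtain rfl : s' = 1 - s := by linarith
    obtain rfl : t' = 1 - t := by linarith
    obtain rfl : a' = 1 - a := by linarith
    linear_combination this
  have hs0 : s = 0 := by
    have := (mul_eq_zero.1 hzero).resolve_right hfv
    nlinarith [mul_nonneg ha.le hs, mul_nonneg ha'.le ht]
  simpa [hs0, show s' = 1 by linarith] using hb

theorem isExtreme_sep_eq_zero {P : Set E} (f : E →ₗ[ℝ] ℝ) (hf : ∀ x ∈ P, 0 ≤ f x) :
    IsExtreme ℝ P {x ∈ P | f x = 0} := by
  refine ⟨sep_subset _ _, ?_⟩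
  rintro x hx y hy _ ⟨-, hz⟩ ⟨a, b, ha, hb, -, rfl⟩
  simp only [map_add, map_smul, smul_eq_mul] at hz
  have h1 := mul_nonneg ha.le (hf x hx)
  have h2 := mul_nonneg hb.le (hf y hy)
  have h0 : a * f x = 0 := by linarith
  exact ⟨hx, (mul_eq_zero.1 h0).resolve_left ha.ne'⟩

theorem mem_of_smul_mem_of_isExtreme {P F : Set E} (hF : IsExtreme ℝ P F) (h0 : (0 : E) ∈ P)
    {x : E} (hx : x ∈ P) {t : ℝ} (ht : 0 < t) (ht1 : t ≤ 1) (htx : t • x ∈ F) : x ∈ F := by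
  rcases ht1.eq_or_lt with rfl | ht1
  · simpa using htx
  · exact hF.left_mem_of_mem_openSegment hx h0 htx
      ⟨t, 1 - t, ht, sub_pos.2 ht1, add_sub_cancel t 1, by simp⟩

theorem Icc_subset_of_isExtreme [PartialOrder E] [IsOrderedAddMonoid E] {P F : Set E}
    (hP : P.OrdConnected) (hF : IsExtreme ℝ P F) (hconv : Convex ℝ F) (h0 : (0 : E) ∈ F) {x : E}
    (hx : x ∈ F) : Icc 0 x ⊆ F := by
  intro y hy
  have hyP : y ∈ P := hP.out (hF.1 h0) (hF.1 hx) hy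
  have hxyP : x - y ∈ P :=
    hP.out (hF.1 h0) (hF.1 hx) ⟨sub_nonneg.2 hy.2, sub_le_self x hy.1⟩
  refine hF.left_mem_of_mem_openSegment hyP hxyP
    (hconv hx h0 (a := 1 / 2) (b := 1 / 2) (by norm_num) (by norm_num) (by norm_num)) ?_
  exact ⟨1 / 2, 1 / 2, by norm_num, by norm_num, by norm_num, by module⟩

end ExtremeSubsets

theorem vectorSpan_convexHull (S : Set E) : vectorSpan ℝ (convexHull ℝ S) = vectorSpan ℝ S := by
  rw [← direction_affineSpan, affineSpan_convexHull, direction_affineSpan]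

namespace IsPolytope

variable {P F : Set E}

theorem convex_s15 (hP : IsPolytope P) : Convex ℝ P := by
  obtain ⟨S, rfl⟩ := hP
  exact convex_convexHull ℝ _

theorem finite_extremePoints_s15 (hP : IsPolytope P) : (P.extremePoints ℝ).Finite := by
  obtain ⟨S, rfl⟩ := hP
  exact S.finite_toSet.subset extremePoints_convexHull_subset

theorem convexHull_extremePoints_s15 (hP : IsPolytope P) : convexHull ℝ (P.extremePoints ℝ) = P := by
  obtain ⟨S, rfl⟩ := hP
  exact convexHull_extremePoints_convexHull_s15 S.finite_toSet

theorem of_finite {S : Set E} (hS : S.Finite) : IsPolytope (convexHull ℝ S) :=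
  ⟨hS.toFinset, by rw [hS.coe_toFinset]⟩

theorem of_isFaceOf (hP : IsPolytope P) (hF : IsFaceOf F P) (hconv : Convex ℝ F) :
    IsPolytope F := by
  obtain ⟨S, rfl⟩ := hP
  rw [← convexHull_inter_eq_of_isExtreme hF hconv]
  exact of_finite (S.finite_toSet.inter_of_left F)

theorem injOn_extremePoints : InjOn (extremePoints ℝ) {P : Set E | IsPolytope P} :=
  fun P hP Q hQ hPQ => by
    rw [← hP.convexHull_extremePoints_s15, ← hQ.convexHull_extremePoints_s15, hPQ]

theorem finite_polytope_faces (hP : IsPolytope P) :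
    {F : Set E | IsFaceOf F P ∧ IsPolytope F}.Finite :=
  .of_injOn (fun _ hF => hF.1.extremePoints_subset_extremePoints)
    (injOn_extremePoints.mono fun _ hF => hF.2) hP.finite_extremePoints_s15.finite_subsets

theorem simpCount_eq_simpCount0_add_simpCount1_s15 (hP : IsPolytope P) (k : ℤ) :
    simpCount P k = simpCount0 P k + simpCount1 P k := by
  unfold simpCount simpCount0 simpCount1
  rw [← ncard_union_eq (disjoint_left.2 fun F hF hF' => hF'.2.2.2 hF.2.2.2)
    (hP.finite_polytope_faces.subset fun F hF => ⟨hF.1, hF.2.1.1⟩)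
    (hP.finite_polytope_faces.subset fun F hF => ⟨hF.1, hF.2.1.1⟩)]
  congr 1
  ext F
  simp only [mem_ofPred_eq, mem_union]
  tauto

end IsPolytope

theorem isSimplex_iff_affineIndependent {F : Set E} :
    IsSimplex F ↔
      IsPolytope F ∧ AffineIndependent ℝ ((↑) : F.extremePoints ℝ → E) := by
  refine and_congr_right fun hF => ?_
  rcases F.eq_empty_or_nonempty with rfl | hne
  · have : IsEmpty ((∅ : Set E).extremePoints ℝ) := by simp
    exact iff_of_true (by simp [vertexCount, polyDim]) (affineIndependent_of_subsingleton ℝ _)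
  have := hF.finite_extremePoints_s15.fintype
  have hvert : (F.extremePoints ℝ).Nonempty := by
    rwa [← convexHull_nonempty_iff (𝕜 := ℝ), hF.convexHull_extremePoints_s15]
  have hcard : Fintype.card (F.extremePoints ℝ) = ((F.extremePoints ℝ).ncard - 1) + 1 := by
    have := (ncard_pos hF.finite_extremePoints_s15).2 hvert
    rw [← Nat.card_eq_fintype_card, Nat.card_coe_set_eq]
    omega
  rw [affineIndependent_iff_finrank_vectorSpan_eq ℝ _ hcard, Subtype.range_coe,
    ← vectorSpan_convexHull, hF.convexHull_extremePoints_s15, polyDim, if_neg hne.ne_empty, vertexCount]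
  rw [← Nat.card_eq_fintype_card, Nat.card_coe_set_eq] at hcard
  omega

theorem isSimplex_iff_linearIndepOn {F : Set E} (h0 : (0 : E) ∈ F.extremePoints ℝ) :
    IsSimplex F ↔ IsPolytope F ∧ LinearIndepOn ℝ id (F.extremePoints ℝ \ {0}) := by
  rw [isSimplex_iff_affineIndependent, affineIndependent_set_iff_linearIndependent_vsub ℝ h0]
  have himage : (fun p : E => p -ᵥ (0 : E)) '' (F.extremePoints ℝ \ {0}) =
      F.extremePoints ℝ \ {0} := by
    simp
  rw [himage]
  rfl

theorem extremePoints_convexHull_of_subset {F T : Set E} (hF : Convex ℝ F)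
    (hT : T ⊆ F.extremePoints ℝ) : (convexHull ℝ T).extremePoints ℝ = T :=
  extremePoints_convexHull_subset.antisymm fun _ hv =>
    inter_extremePoints_subset_extremePoints_of_subset
      (convexHull_min (hT.trans extremePoints_subset) hF) ⟨subset_convexHull ℝ T hv, hT hv⟩

namespace IsSimplex

variable {F T : Set E} {v : E}

theorem polyDim_eq_ncard_extremePoints_sdiff (hF : IsSimplex F) (hv : v ∈ F.extremePoints ℝ) :
    polyDim F = (F.extremePoints ℝ \ {v}).ncard := by
  have := hF.2
  rw [vertexCount, ← ncard_sdiff_singleton_add_one hv hF.1.finite_extremePoints_s15] at this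
  push_cast at this
  linarith

theorem convexHull_of_subset (hF : IsSimplex F) (hT : T ⊆ F.extremePoints ℝ) :
    IsSimplex (convexHull ℝ T) := by
  refine isSimplex_iff_affineIndependent.2
    ⟨.of_finite (hF.1.finite_extremePoints_s15.subset hT), ?_⟩
  rw [extremePoints_convexHull_of_subset hF.1.convex_s15 hT]
  exact (isSimplex_iff_affineIndependent.1 hF).2.mono hT

/-- The facet of a simplex opposite to one of its vertices `v`. -/
def oppositeFacet (F : Set E) (v : E) : Set E := convexHull ℝ (F.extremePoints ℝ \ {v})

theorem extremePoints_oppositeFacet (hF : IsSimplex F) :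
    (oppositeFacet F v).extremePoints ℝ = F.extremePoints ℝ \ {v} :=
  extremePoints_convexHull_of_subset hF.1.convex_s15 sdiff_subset

theorem isSimplex_oppositeFacet (hF : IsSimplex F) : IsSimplex (oppositeFacet F v) :=
  hF.convexHull_of_subset sdiff_subset

theorem polyDim_oppositeFacet (hF : IsSimplex F) (hv : v ∈ F.extremePoints ℝ) :
    polyDim (oppositeFacet F v) = polyDim F - 1 := by
  have := (hF.isSimplex_oppositeFacet (v := v)).2
  rw [vertexCount, hF.extremePoints_oppositeFacet,
    ← hF.polyDim_eq_ncard_extremePoints_sdiff hv] at this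
  linarith

theorem notMem_affineSpan_sdiff (hF : IsSimplex F) (hv : v ∈ F.extremePoints ℝ) :
    v ∉ affineSpan ℝ (F.extremePoints ℝ \ {v}) := by
  have := (isSimplex_iff_affineIndependent.1 hF).2.notMem_affineSpan_sdiff ⟨v, hv⟩ univ
  rwa [image_sdiff Subtype.val_injective, image_univ, Subtype.range_coe, image_singleton] at this

theorem notMem_oppositeFacet (hF : IsSimplex F) (hv : v ∈ F.extremePoints ℝ) :
    v ∉ oppositeFacet F v :=
  fun h => hF.notMem_affineSpan_sdiff hv (convexHull_subset_affineSpan _ h)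

theorem isFaceOf_oppositeFacet (hF : IsSimplex F) (hv : v ∈ F.extremePoints ℝ) :
    IsFaceOf (oppositeFacet F v) F := by
  have := isExtreme_convexHull_insert (hF.notMem_affineSpan_sdiff hv)
  rwa [insert_sdiff_self_of_mem hv, hF.1.convexHull_extremePoints_s15] at this

end IsSimplex

theorem IsFaceOf.mem_extremePoints {F P : Set E} {v : E} (hF : IsFaceOf F P)
    (hv : v ∈ P.extremePoints ℝ) (hvF : v ∈ F) : v ∈ F.extremePoints ℝ :=
  inter_extremePoints_subset_extremePoints_of_subset hF.1 ⟨hvF, hv⟩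

theorem IsPolytope.simpCount0_le_simpCount1 {P : Set E} (hP : IsPolytope P)
    (h0 : (0 : E) ∈ P.extremePoints ℝ) (k : ℤ) : simpCount0 P k ≤ simpCount1 P (k - 1) := by
  refine ncard_le_ncard_of_injOn (IsSimplex.oppositeFacet · 0) ?_ ?_
    (hP.finite_polytope_faces.subset fun F hF => ⟨hF.1, hF.2.1.1⟩)
  · rintro F ⟨hF, hsimp, rfl, h0F⟩
    have h0F := hF.mem_extremePoints h0 h0F
    exact ⟨hF.trans (hsimp.isFaceOf_oppositeFacet h0F), hsimp.isSimplex_oppositeFacet,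
      hsimp.polyDim_oppositeFacet h0F, hsimp.notMem_oppositeFacet h0F⟩
  · rintro F ⟨hF, hsimp, -, h0F⟩ G ⟨hG, hsimp', -, h0G⟩ hFG
    refine IsPolytope.injOn_extremePoints hsimp.1 hsimp'.1 ?_
    have h : (F.extremePoints ℝ) \ {0} = G.extremePoints ℝ \ {0} := by
      rw [← hsimp.extremePoints_oppositeFacet, ← hsimp'.extremePoints_oppositeFacet]
      exact congrArg _ hFG
    rw [← insert_sdiff_self_of_mem (hF.mem_extremePoints h0 h0F), h,
      insert_sdiff_self_of_mem (hG.mem_extremePoints h0 h0G)]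

theorem finite_extremePoints_setOf_forall_le {ι : Type*} [Finite ι] (f : ι → E →ₗ[ℝ] ℝ)
    (b : ι → ℝ) : ({x | ∀ i, f i x ≤ b i}.extremePoints ℝ).Finite := by
  refine .of_injOn (f := fun x => {i | f i x = b i}) (mapsTo_univ _ _) ?_ finite_univ
  intro x hx y hy hxy
  -- Points with the same tight constraints: the segment from `y` to `x` can be prolonged past `x`.
  have hprolong : ∀ᶠ ε in 𝓝[>] (0 : ℝ), ∀ i, f i (x + ε • (x - y)) ≤ b i := by
    refine Filter.eventually_all.2 fun i => ?_
    simp only [map_add, map_smul, map_sub, smul_eq_mul]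
    rcases (hx.1 i).eq_or_lt with htight | hslack
    · have htight' : f i y = b i := (Set.ext_iff.1 hxy i).1 htight
      simp [htight, htight']
    · have hcont : Continuous fun ε : ℝ => f i x + ε * (f i x - f i y) := by fun_prop
      exact nhdsWithin_le_nhds <| (hcont.tendsto' 0 (f i x) (by simp)).eventually_le_const hslack
  obtain ⟨ε, hε, hε_pos⟩ := (hprolong.and self_mem_nhdsWithin).exists
  replace hε_pos : 0 < ε := hε_pos
  refine (hx.2 hy.1 hε ⟨ε / (1 + ε), 1 / (1 + ε), by positivity, by positivity, ?_, ?_⟩).symm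
  · field_simp
    ring
  · match_scalars <;> field_simp
    ring

theorem isPolytope_setOf_forall_le {V ι : Type*} [NormedAddCommGroup V] [NormedSpace ℝ V]
    [FiniteDimensional ℝ V] [Finite ι] (f : ι → V →ₗ[ℝ] ℝ) (b : ι → ℝ)
    (hbdd : Bornology.IsBounded {x | ∀ i, f i x ≤ b i}) :
    IsPolytope {x | ∀ i, f i x ≤ b i} := by
  have := FiniteDimensional.proper_real V
  have hclosed : IsClosed {x | ∀ i, f i x ≤ b i} := by
    simp only [ofPred_forall]
    exact isClosed_iInter fun i =>
      isClosed_le (f i).continuous_of_finiteDimensional continuous_const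
  have hconv : Convex ℝ {x | ∀ i, f i x ≤ b i} := by
    simp only [ofPred_forall]
    exact convex_iInter fun i => convex_halfSpace_le (f i).isLinear (b i)
  have hcompact := Metric.isCompact_of_isClosed_isBounded hclosed hbdd
  have hfin := finite_extremePoints_setOf_forall_le f b
  rw [← closure_convexHull_extremePoints hcompact hconv, (hfin.isClosed_convexHull ℝ).closure_eq]
  exact .of_finite hfin

section CharacteristicVectors

variable {α : Type*} {S : Set α} {p : α}

theorem chi_of_mem (hp : p ∈ S) : chi S p = 1 := if_pos hp

theorem chi_of_notMem (hp : p ∉ S) : chi S p = 0 := if_neg hp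

theorem chi_injective : Function.Injective (chi : Set α → α → ℝ) := by
  intro S T hST
  ext p
  have := congrFun hST p
  by_cases hS : p ∈ S <;> by_cases hT : p ∈ T <;> simp_all [chi]

theorem chi_empty : chi (∅ : Set α) = 0 := by
  ext p
  exact chi_of_notMem (notMem_empty p)

theorem chi_ne_zero (hS : S.Nonempty) : chi S ≠ 0 := by
  rw [← chi_empty]
  exact chi_injective.ne hS.ne_empty

theorem chi_singleton [DecidableEq α] (p : α) : chi {p} = Pi.single p 1 := by
  ext q
  simp [chi, Pi.single_apply]

theorem chi_pair {p q : α} (hpq : p ≠ q) : chi {p, q} = chi {p} + chi {q} := by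
  ext r
  by_cases hp : r = p <;> by_cases hq : r = q <;> simp_all [chi]

theorem chi_mem_extremePoints {F : Set (α → ℝ)} (hF : F ⊆ Icc 0 1) (hS : chi S ∈ F) :
    chi S ∈ F.extremePoints ℝ := by
  refine inter_extremePoints_subset_extremePoints_of_subset hF ⟨hS, ?_⟩
  rw [← pi_univ_Icc, extremePoints_pi]
  intro p _
  by_cases hp : p ∈ S <;> simp [extremePoints_Icc, chi, hp]

theorem zero_mem_extremePoints {F : Set (α → ℝ)} (hF : F ⊆ Icc 0 1) (h0 : 0 ∈ F) :
    0 ∈ F.extremePoints ℝ := by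
  rw [← chi_empty] at h0 ⊢
  exact chi_mem_extremePoints hF h0

theorem linearIndependent_chi_Ici [PartialOrder α] :
    LinearIndependent ℝ fun p : α => chi (Ici p) := by
  rw [linearIndependent_iff']
  intro s g hsum
  by_contra! hne
  obtain ⟨m, ⟨hms, hgm⟩, hmin⟩ :=
    (s.finite_toSet.subset (sep_subset (s : Set α) fun p => g p ≠ 0)).exists_minimal hne
  have hothers : ∀ p ∈ s, p ≠ m → g p * chi (Ici p) m = 0 := by
    intro p hp hpm
    by_cases hle : p ≤ m
    · have hgp : g p = 0 := by
        by_contra hgp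
        exact hpm (hle.antisymm (hmin ⟨hp, hgp⟩ hle))
      rw [hgp, zero_mul]
    · rw [chi_of_notMem (mt mem_Ici.1 hle), mul_zero]
  have heval := congrFun hsum m
  simp only [Finset.sum_apply, Pi.smul_apply, smul_eq_mul, Pi.zero_apply] at heval
  rw [Finset.sum_eq_single_of_mem m hms hothers, chi_of_mem self_mem_Ici, mul_one] at heval
  exact hgm heval

end CharacteristicVectors

section OrderPolytope

variable {α : Type*} [PartialOrder α]

theorem orderPolytope_subset_Icc : orderPolytope α ⊆ Icc 0 1 :=
  fun _ hx => ⟨fun p => (hx.1 p).1, fun p => (hx.1 p).2⟩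

theorem zero_mem_orderPolytope : 0 ∈ orderPolytope α := by
  simp [orderPolytope]

theorem isPolytope_orderPolytope [Finite α] : IsPolytope (orderPolytope α) := by
  have := Fintype.ofFinite α
  let f : α ⊕ α ⊕ {pq : α × α // pq.1 ≤ pq.2} → (α → ℝ) →ₗ[ℝ] ℝ :=
    Sum.elim (fun p => -.proj p) (Sum.elim (fun p => .proj p)
      fun pq => .proj pq.1.1 - .proj pq.1.2)
  let b : α ⊕ α ⊕ {pq : α × α // pq.1 ≤ pq.2} → ℝ :=
    Sum.elim (fun _ => 0) (Sum.elim (fun _ => 1) fun _ => 0)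
  have h : orderPolytope α = {x | ∀ i, f i x ≤ b i} := by
    ext x
    simp [orderPolytope, f, b, forall_and, and_assoc]
  rw [h]
  exact isPolytope_setOf_forall_le f b
    (h ▸ (Metric.isBounded_Icc 0 1).subset orderPolytope_subset_Icc)

/- `x` is the midpoint of `min (2x) 1` and `max (2x - 1) 0`, which are again order preserving. -/
theorem extremePoints_orderPolytope_subset :
    (orderPolytope α).extremePoints ℝ ⊆ range chi := by
  intro x hx
  have hmin : (fun p => min (2 * x p) 1) ∈ orderPolytope α := by
    refine ⟨fun p => ⟨le_min (by linarith [(hx.1.1 p).1]) zero_le_one, min_le_right _ _⟩,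
      fun p q hpq => ?_⟩
    have := hx.1.2 p q hpq
    exact min_le_min_right 1 (by linarith)
  have hmax : (fun p => max (2 * x p - 1) 0) ∈ orderPolytope α := by
    refine ⟨fun p => ⟨le_max_right _ _, max_le (by linarith [(hx.1.1 p).2]) zero_le_one⟩,
      fun p q hpq => ?_⟩
    have := hx.1.2 p q hpq
    exact max_le_max_right 0 (by linarith)
  have hmid : x ∈ openSegment ℝ (fun p => min (2 * x p) 1) fun p => max (2 * x p - 1) 0 := by
    refine ⟨1 / 2, 1 / 2, by norm_num, by norm_num, by norm_num, ?_⟩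
    ext p
    simp only [Pi.add_apply, Pi.smul_apply, smul_eq_mul]
    grind
  have hfix := hx.2 hmin hmax hmid
  refine ⟨{p | x p = 1}, ?_⟩
  ext p
  have := congrFun hfix p
  simp only [chi, mem_ofPred_eq]
  grind

/-- The face of the order polytope attached to a set `S` (in practice a chain): the
order-preserving maps that are constant on the points with the same greatest lower element in `S`,
and vanish at the points having no element of `S` below them. -/
def chainFace (S : Set α) : Set (α → ℝ) :=
  {x ∈ orderPolytope α | (∀ q, (∀ p ∈ S, ¬p ≤ q) → x q = 0) ∧
    ∀ p q, IsGreatest {r ∈ S | r ≤ q} p → x q = x p}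

variable {S : Set α}

theorem isFaceOf_chainFace (S : Set α) : IsFaceOf (chainFace S) (orderPolytope α) := by
  refine ⟨sep_subset _ _, fun x hx y hy z hz hzxy => ⟨hx, fun q hq => ?_, fun p q hp => ?_⟩⟩
  · exact ((isExtreme_sep_eq_zero (.proj q) fun x hx => (hx.1 q).1).left_mem_of_mem_openSegment
      hx hy ⟨hz.1, hz.2.1 q hq⟩ hzxy).2
  · have hpq (x) (hx : x ∈ orderPolytope α) : 0 ≤ x q - x p := sub_nonneg.2 (hx.2 p q hp.1.2)
    exact sub_eq_zero.1 ((isExtreme_sep_eq_zero (.proj q - .proj p) hpq).left_mem_of_mem_openSegment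
      hx hy ⟨hz.1, sub_eq_zero.2 (hz.2.2 p q hp)⟩ hzxy).2

theorem zero_mem_chainFace (S : Set α) : 0 ∈ chainFace S :=
  ⟨zero_mem_orderPolytope, by simp, by simp⟩

theorem convex_chainFace [Finite α] (S : Set α) : Convex ℝ (chainFace S) := by
  refine fun x hx y hy a b ha hb hab =>
    ⟨isPolytope_orderPolytope.convex_s15 hx.1 hy.1 ha hb hab, fun q hq => ?_, fun p q hp => ?_⟩
  · simp [hx.2.1 q hq, hy.2.1 q hq]
  · simp [hx.2.2 p q hp, hy.2.2 p q hp]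

theorem chi_Ici_mem_chainFace {p : α} (hp : p ∈ S) : chi (Ici p) ∈ chainFace S := by
  refine ⟨⟨fun q => ?_, fun q r hqr => ?_⟩, fun q hq => ?_, fun r q hr => ?_⟩
  · by_cases hq : p ≤ q <;> simp [chi, hq]
  · by_cases hq : p ≤ q
    · simp [chi, hq, hq.trans hqr]
    · rw [chi_of_notMem (mt mem_Ici.1 hq)]
      unfold chi
      positivity
  · exact chi_of_notMem (hq p hp)
  · by_cases hpr : r ∈ Ici p
    · have hpq : q ∈ Ici p := le_trans hpr hr.1.2
      rw [chi_of_mem hpr, chi_of_mem hpq]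
    · have hpq : q ∉ Ici p := fun hpq => hpr (hr.2 ⟨hp, hpq⟩)
      rw [chi_of_notMem hpr, chi_of_notMem hpq]

theorem chainFace_subset_Icc : chainFace S ⊆ Icc 0 1 :=
  (sep_subset _ _).trans orderPolytope_subset_Icc

theorem zero_mem_extremePoints_chainFace : 0 ∈ (chainFace S).extremePoints ℝ :=
  zero_mem_extremePoints chainFace_subset_Icc (zero_mem_chainFace S)

theorem exists_eq_Ici_of_chi_mem_chainFace (hfin : S.Finite) (hS : IsChain (· ≤ ·) S)
    {U : Set α} (hU : U.Nonempty) (h : chi U ∈ chainFace S) : ∃ p ∈ S, U = Ici p := by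
  have hgreatest : ∀ q ∈ U, ∃ r ∈ S ∩ U, IsGreatest {r ∈ S | r ≤ q} r := by
    intro q hq
    have hbelow : {r ∈ S | r ≤ q}.Nonempty := by
      by_contra! hempty
      have := h.2.1 q fun r hr hrq => (hempty.subset ⟨hr, hrq⟩ : r ∈ (∅ : Set α))
      rw [chi_of_mem hq] at this
      exact one_ne_zero this
    obtain ⟨r, hr⟩ := (hfin.subset (sep_subset _ _)).exists_maximal hbelow
    have hr := (hS.mono (sep_subset _ _)).directedOn.maximal_iff_isGreatest.1 hr
    refine ⟨r, ⟨hr.1.1, ?_⟩, hr⟩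
    by_contra hrU
    have := h.2.2 r q hr
    rw [chi_of_mem hq, chi_of_notMem hrU] at this
    exact one_ne_zero this
  obtain ⟨q, hq⟩ := hU
  obtain ⟨r, hr, -⟩ := hgreatest q hq
  obtain ⟨p, hp⟩ := (hfin.subset inter_subset_left).exists_minimal ⟨r, hr⟩
  have hleast : ∀ r ∈ S ∩ U, p ≤ r := fun r hr =>
    (hS.total hp.1.1 hr.1).elim id (hp.2 hr)
  refine ⟨p, hp.1.1, subset_antisymm (fun q hq => ?_) fun q hpq => ?_⟩
  · obtain ⟨r, hr, hrq⟩ := hgreatest q hq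
    exact (hleast r hr).trans hrq.1.2
  · by_contra hqU
    have := h.1.2 p q hpq
    rw [chi_of_mem hp.1.2, chi_of_notMem hqU] at this
    exact absurd this (by norm_num)

theorem extremePoints_chainFace_sdiff_zero (hfin : S.Finite) (hS : IsChain (· ≤ ·) S) :
    (chainFace S).extremePoints ℝ \ {0} = (fun p => chi (Ici p)) '' S := by
  refine subset_antisymm ?_ ?_
  · rintro v ⟨hv, hv0⟩
    obtain ⟨U, rfl⟩ := extremePoints_orderPolytope_subset
      ((isFaceOf_chainFace S).extremePoints_subset_extremePoints hv)
    have hU : U.Nonempty := by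
      by_contra! hU
      exact hv0 (by rw [hU, chi_empty, mem_singleton_iff])
    obtain ⟨p, hp, rfl⟩ := exists_eq_Ici_of_chi_mem_chainFace hfin hS hU hv.1
    exact mem_image_of_mem _ hp
  · rintro _ ⟨p, hp, rfl⟩
    exact ⟨chi_mem_extremePoints chainFace_subset_Icc (chi_Ici_mem_chainFace hp),
      chi_ne_zero nonempty_Ici⟩

theorem isSimplex_chainFace [Finite α] (hS : IsChain (· ≤ ·) S) : IsSimplex (chainFace S) := by
  rw [isSimplex_iff_linearIndepOn zero_mem_extremePoints_chainFace,
    extremePoints_chainFace_sdiff_zero S.toFinite hS]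
  exact ⟨isPolytope_orderPolytope.of_isFaceOf (isFaceOf_chainFace S) (convex_chainFace S),
    (linearIndependent_chi_Ici.linearIndepOn S).id_image⟩

theorem polyDim_chainFace [Finite α] (hS : IsChain (· ≤ ·) S) :
    polyDim (chainFace S) = S.ncard := by
  rw [(isSimplex_chainFace hS).polyDim_eq_ncard_extremePoints_sdiff
    zero_mem_extremePoints_chainFace, extremePoints_chainFace_sdiff_zero S.toFinite hS,
    ncard_image_of_injective _ linearIndependent_chi_Ici.injective]

theorem injOn_chainFace [Finite α] : InjOn chainFace {S : Set α | IsChain (· ≤ ·) S} := by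
  intro S hS T hT hST
  refine linearIndependent_chi_Ici.injective.image_injective ?_
  rw [← extremePoints_chainFace_sdiff_zero S.toFinite hS,
    ← extremePoints_chainFace_sdiff_zero T.toFinite hT, hST]

theorem ncard_chains_le_simpCount0_orderPolytope [Finite α] (k : ℤ) :
    {S : Set α | IsChain (· ≤ ·) S ∧ (S.ncard : ℤ) = k}.ncard ≤
      simpCount0 (orderPolytope α) k := by
  refine ncard_le_ncard_of_injOn chainFace ?_ (injOn_chainFace.mono fun S hS => hS.1)
    (isPolytope_orderPolytope.finite_polytope_faces.subset fun F hF => ⟨hF.1, hF.2.1.1⟩)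
  rintro S ⟨hS, rfl⟩
  exact ⟨isFaceOf_chainFace S, isSimplex_chainFace hS, polyDim_chainFace hS, zero_mem_chainFace S⟩

end OrderPolytope

section ChainPolytope

variable {α : Type*} [PartialOrder α]

theorem chainPolytope_subset_Icc : chainPolytope α ⊆ Icc 0 1 :=
  fun x hx => ⟨hx.1, fun p => by simpa using hx.2 {p} (by simp)⟩

theorem ordConnected_chainPolytope : (chainPolytope α).OrdConnected where
  out' _ hx _ hy _ hz := ⟨fun p => (hx.1 p).trans (hz.1 p),
    fun s hs => (Finset.sum_le_sum fun p _ => hz.2 p).trans (hy.2 s hs)⟩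

theorem isPolytope_chainPolytope [Finite α] : IsPolytope (chainPolytope α) := by
  have := Fintype.ofFinite α
  let f : α ⊕ {s : Finset α // IsChain (· ≤ ·) (s : Set α)} → (α → ℝ) →ₗ[ℝ] ℝ :=
    Sum.elim (fun p => -.proj p) fun s => ∑ p ∈ s.1, .proj p
  let b : α ⊕ {s : Finset α // IsChain (· ≤ ·) (s : Set α)} → ℝ :=
    Sum.elim (fun _ => 0) fun _ => 1
  have h : chainPolytope α = {x | ∀ i, f i x ≤ b i} := by
    ext x
    simp [chainPolytope, f, b]
  rw [h]
  exact isPolytope_setOf_forall_le f b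
    (h ▸ (Metric.isBounded_Icc 0 1).subset chainPolytope_subset_Icc)

theorem chi_mem_chainPolytope {A : Set α} (hA : IsAntichain (· ≤ ·) A) :
    chi A ∈ chainPolytope α := by
  classical
  refine ⟨fun p => by unfold chi; positivity, fun s hs => ?_⟩
  have hcard : (s.filter (· ∈ A)).card ≤ 1 := by
    refine Finset.card_le_one.2 fun p hp q hq => ?_
    rw [Finset.mem_filter] at hp hq
    exact inter_subsingleton_of_isChain_of_isAntichain hs hA hp hq
  calc ∑ p ∈ s, chi A p = (s.filter (· ∈ A)).card := by simp [chi]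
    _ ≤ 1 := by exact_mod_cast hcard

/-- The support of a face `F` of the chain polytope that contains the origin: the elements of the
poset whose unit vector lies in `F`. -/
def faceSupport (F : Set (α → ℝ)) : Set α := {p | chi {p} ∈ F}

variable {F : Set (α → ℝ)}

theorem mem_faceSupport_of_ne_zero (hF : IsFaceOf F (chainPolytope α)) (hconv : Convex ℝ F)
    (h0 : 0 ∈ F) {x : α → ℝ} (hx : x ∈ F) {p : α} (hp : x p ≠ 0) : p ∈ faceSupport F := by
  classical
  have hx01 := chainPolytope_subset_Icc (hF.1 hx)
  have hsmul : x p • chi {p} ∈ Icc 0 x := by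
    have happly (q : α) : (x p • chi {p}) q = if q = p then x p else 0 := by simp [chi]
    refine ⟨fun q => ?_, fun q => ?_⟩ <;> rw [happly] <;> split_ifs with hq
    exacts [hx01.1 p, le_rfl, hq ▸ le_rfl, hx01.1 q]
  exact mem_of_smul_mem_of_isExtreme hF (hF.1 h0)
    (chi_mem_chainPolytope (subsingleton_singleton.isAntichain _)) ((hx01.1 p).lt_of_ne' hp)
    (hx01.2 p) (Icc_subset_of_isExtreme ordConnected_chainPolytope hF hconv h0 hx hsmul)

theorem zero_mem_extremePoints_of_isFaceOf_chainPolytope (hF : IsFaceOf F (chainPolytope α))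
    (h0 : 0 ∈ F) : 0 ∈ F.extremePoints ℝ :=
  zero_mem_extremePoints (hF.1.trans chainPolytope_subset_Icc) h0

theorem extremePoints_sdiff_zero_eq_image_faceSupport [Finite α]
    (hF : IsFaceOf F (chainPolytope α)) (hsimp : IsSimplex F) (h0 : 0 ∈ F) :
    F.extremePoints ℝ \ {0} = (fun p => chi {p}) '' faceSupport F := by
  classical
  have := Fintype.ofFinite α
  have hindep := ((isSimplex_iff_linearIndepOn
    (zero_mem_extremePoints_of_isFaceOf_chainPolytope hF h0)).1 hsimp).2
  refine eq_of_linearIndepOn_id_of_span_subtype hindep ?_ ?_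
  · rintro _ ⟨p, hp, rfl⟩
    exact ⟨chi_mem_extremePoints (hF.1.trans chainPolytope_subset_Icc) hp,
      chi_ne_zero (singleton_nonempty p)⟩
  · rintro x ⟨hx, -⟩
    rw [SetLike.mem_coe, pi_eq_sum_univ' x]
    refine sum_mem fun p _ => ?_
    by_cases hp : x p = 0
    · simp [hp]
    · rw [← chi_singleton]
      exact Submodule.smul_mem _ _ (Submodule.subset_span
        (mem_image_of_mem _ (mem_faceSupport_of_ne_zero hF hsimp.1.convex_s15 h0 hx.1 hp)))

theorem isChain_faceSupport [Finite α] (hF : IsFaceOf F (chainPolytope α)) (hsimp : IsSimplex F)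
    (h0 : 0 ∈ F) : IsChain (· ≤ ·) (faceSupport F) := by
  intro p hp q hq hpq
  by_contra! hincomp
  have hpqC : chi {p, q} ∈ chainPolytope α := by
    refine chi_mem_chainPolytope ?_
    rintro a (rfl | rfl) b (rfl | rfl) hab
    exacts [absurd rfl hab, hincomp.1, hincomp.2, absurd rfl hab]
  have hmid : (1 / 2 : ℝ) • chi {p, q} ∈ F := by
    rw [chi_pair hpq, smul_add]
    exact hsimp.1.convex_s15 hp hq (by norm_num) (by norm_num) (by norm_num)
  have hpqF : chi {p, q} ∈ F :=
    mem_of_smul_mem_of_isExtreme hF (hF.1 h0) hpqC (by norm_num) (by norm_num) hmid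
  have hpq_vertex : chi {p, q} ∈ F.extremePoints ℝ \ {0} :=
    ⟨chi_mem_extremePoints (hF.1.trans chainPolytope_subset_Icc) hpqF,
      chi_ne_zero (insert_nonempty p {q})⟩
  rw [extremePoints_sdiff_zero_eq_image_faceSupport hF hsimp h0] at hpq_vertex
  obtain ⟨r, -, hr⟩ := hpq_vertex
  have hr : {r} = {p, q} := chi_injective hr
  have hpr : p = r := hr.superset (mem_insert p {q})
  have hqr : q = r := hr.superset (mem_insert_of_mem p (mem_singleton q))
  exact hpq (hpr.trans hqr.symm)

theorem polyDim_eq_ncard_faceSupport [Finite α] (hF : IsFaceOf F (chainPolytope α))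
    (hsimp : IsSimplex F) (h0 : 0 ∈ F) : polyDim F = (faceSupport F).ncard := by
  rw [hsimp.polyDim_eq_ncard_extremePoints_sdiff
    (zero_mem_extremePoints_of_isFaceOf_chainPolytope hF h0),
    extremePoints_sdiff_zero_eq_image_faceSupport hF hsimp h0,
    ncard_image_of_injective]
  exact chi_injective.comp singleton_injective

theorem injOn_faceSupport [Finite α] :
    InjOn faceSupport {F | IsFaceOf F (chainPolytope α) ∧ IsSimplex F ∧ 0 ∈ F} := by
  rintro F ⟨hF, hsimp, h0⟩ G ⟨hG, hsimp', h0'⟩ hFG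
  refine IsPolytope.injOn_extremePoints hsimp.1 hsimp'.1 ?_
  rw [← insert_sdiff_self_of_mem (zero_mem_extremePoints_of_isFaceOf_chainPolytope hF h0),
    ← insert_sdiff_self_of_mem (zero_mem_extremePoints_of_isFaceOf_chainPolytope hG h0'),
    extremePoints_sdiff_zero_eq_image_faceSupport hF hsimp h0,
    extremePoints_sdiff_zero_eq_image_faceSupport hG hsimp' h0', hFG]

theorem simpCount0_chainPolytope_le_ncard_chains [Finite α] (k : ℤ) :
    simpCount0 (chainPolytope α) k ≤
      {S : Set α | IsChain (· ≤ ·) S ∧ (S.ncard : ℤ) = k}.ncard := by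
  refine ncard_le_ncard_of_injOn faceSupport ?_ (injOn_faceSupport.mono ?_) (toFinite _)
  · rintro F ⟨hF, hsimp, rfl, h0⟩
    exact ⟨isChain_faceSupport hF hsimp h0, (polyDim_eq_ncard_faceSupport hF hsimp h0).symm⟩
  · rintro F ⟨hF, hsimp, -, h0⟩
    exact ⟨hF, hsimp, h0⟩

end ChainPolytope

theorem simpCount0_chainPolytope_le_simpCount0_orderPolytope {α : Type*} [PartialOrder α]
    [Finite α] (k : ℤ) : simpCount0 (chainPolytope α) k ≤ simpCount0 (orderPolytope α) k :=
  (simpCount0_chainPolytope_le_ncard_chains k).trans (ncard_chains_le_simpCount0_orderPolytope k)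

/-- the coefficient-wise inequalities `0 ≤ α ≤ β ≤ γ ≤ δ` and
`0 ≤ x(β − α) ≤ δ − γ` for the polynomials `α = (1/x)S⁰_{C(P)}`, `β = (1/x)S⁰_{O(P)}`,
`γ = S¹_{O(P)}`, `δ = S¹_{C(P)}`: the coefficient of `x^j` in `α` (resp. `β`) is the
number of `j`-dimensional origin-containing simplex faces, and in `γ` (resp. `δ`) it is
the number of `(j-1)`-dimensional simplex faces avoiding the origin. -/
theorem abcd_inequalities (α : Type*) [Fintype α] [PartialOrder α]
    (h : ∀ k : ℤ, simpCount (orderPolytope α) k ≤ simpCount (chainPolytope α) k) :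
    (∀ j : ℤ,
      simpCount0 (chainPolytope α) j ≤ simpCount0 (orderPolytope α) j ∧
      simpCount0 (orderPolytope α) j ≤ simpCount1 (orderPolytope α) (j - 1) ∧
      simpCount1 (orderPolytope α) (j - 1) ≤ simpCount1 (chainPolytope α) (j - 1)) ∧
    (∀ j : ℤ,
      0 ≤ (simpCount0 (orderPolytope α) j : ℤ) - simpCount0 (chainPolytope α) j ∧
      (simpCount0 (orderPolytope α) j : ℤ) - simpCount0 (chainPolytope α) j
        ≤ (simpCount1 (chainPolytope α) j : ℤ) - simpCount1 (orderPolytope α) j) := by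
  have h_chain_le_order (j : ℤ) := simpCount0_chainPolytope_le_simpCount0_orderPolytope (α := α) j
  have h_order (j : ℤ) := isPolytope_orderPolytope.simpCount0_le_simpCount1
    (zero_mem_extremePoints orderPolytope_subset_Icc (zero_mem_orderPolytope (α := α))) j
  have h_split (j : ℤ) : simpCount0 (orderPolytope α) j + simpCount1 (orderPolytope α) j ≤
      simpCount0 (chainPolytope α) j + simpCount1 (chainPolytope α) j := by
    rw [← isPolytope_orderPolytope.simpCount_eq_simpCount0_add_simpCount1_s15,
      ← isPolytope_chainPolytope.simpCount_eq_simpCount0_add_simpCount1_s15]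
    exact h j
  refine ⟨fun j => ⟨h_chain_le_order j, h_order j, ?_⟩, fun j => ?_⟩
  · linarith [h_chain_le_order (j - 1), h_split (j - 1)]
  · have := h_chain_le_order j
    have := h_split j
    omega
end
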